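/- arXiv:1802.02993 — 14 statements merged into one kernel-verified Lean document; each statement's English description precedes it below -/
import Mathlib

section
/- Fix k ∈ {1,…,n+1}. For y ∈ ℝ^{n+1} let s = ∑_{j=1}^{n+1} y_j and let y' ∈ ℝ^{n+1} be defined by y'_j = y_j for j ≠ k and y'_k = π/2 − s. Then (i) cos(∑_{j=1}^{n+1} y'_j) · ∏_{j=1}^{n+1} sin y'_j = cos(s) · ∏_{j=1}^{n+1} sin y_j for all y ∈ ℝ^{n+1}; (ii) y ∈ Ω if and only if y' ∈ Ω; and hence (iii) F(y') = F(y) for all y ∈ Ω. -/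
open Real Finset

theorem stmt_3 (n : ℕ) (hn : 1 ≤ n) (k : Fin (n+1))
    (Ω : Set (Fin (n+1) → ℝ))
    (hΩ : Ω = {y | (∀ j, 0 < y j) ∧ ∑ j, y j < π/2})
    (F : (Fin (n+1) → ℝ) → ℝ)
    (hF : ∀ y, F y = (cos (∑ j, y j) * ∏ j, sin (y j)) ^ ((1:ℝ)/((n:ℝ)+1))) :
    (∀ y : Fin (n+1) → ℝ,
        cos (∑ j, Function.update y k (π/2 - ∑ i, y i) j) *
          ∏ j, sin (Function.update y k (π/2 - ∑ i, y i) j)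
        = cos (∑ j, y j) * ∏ j, sin (y j)) ∧
    (∀ y : Fin (n+1) → ℝ, y ∈ Ω ↔ Function.update y k (π/2 - ∑ i, y i) ∈ Ω) ∧
    (∀ y ∈ Ω, F (Function.update y k (π/2 - ∑ i, y i)) = F y) := by
  have hsum : ∀ y : Fin (n+1) → ℝ,
      ∑ j, Function.update y k (π/2 - ∑ i, y i) j = π/2 - y k := by
    intro y
    rw [Finset.sum_update_of_mem (Finset.mem_univ k)]
    have h := Finset.add_sum_erase Finset.univ y (Finset.mem_univ k)
    rw [Finset.sdiff_singleton_eq_erase]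
    linarith
  have h1 : ∀ y : Fin (n+1) → ℝ,
        cos (∑ j, Function.update y k (π/2 - ∑ i, y i) j) *
          ∏ j, sin (Function.update y k (π/2 - ∑ i, y i) j)
        = cos (∑ j, y j) * ∏ j, sin (y j) := by
    intro y
    rw [hsum, Real.cos_pi_div_two_sub,
      ← Finset.mul_prod_erase Finset.univ _ (Finset.mem_univ k),
      ← Finset.mul_prod_erase Finset.univ (fun j => sin (y j)) (Finset.mem_univ k)]
    have h : ∏ j ∈ Finset.univ.erase k, sin (Function.update y k (π/2 - ∑ i, y i) j)
        = ∏ j ∈ Finset.univ.erase k, sin (y j) := by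
      refine Finset.prod_congr rfl fun j hj => ?_
      rw [Function.update_of_ne (Finset.ne_of_mem_erase hj)]
    rw [h, Function.update_self, Real.sin_pi_div_two_sub]
    ring
  refine ⟨h1, ?_, ?_⟩
  · intro y
    subst hΩ
    simp only [Set.mem_setOf_eq, hsum]
    constructor
    · rintro ⟨h, hs⟩
      refine ⟨fun j => ?_, by linarith [h k]⟩
      by_cases hj : j = k
      · subst hj
        rw [Function.update_self]
        linarith
      · rw [Function.update_of_ne hj]
        exact h j
    · rintro ⟨h, hs⟩
      refine ⟨fun j => ?_, ?_⟩
      · by_cases hj : j = k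
        · subst hj
          linarith
        · have := h j
          rwa [Function.update_of_ne hj] at this
      · have := h k
        rw [Function.update_self] at this
        linarith
  · intro y _
    rw [hF, hF, h1]
end

section
/- Fix k ∈ {1,…,n+1}. Let R_k : ℝ^{n+1} → ℝ^{n+1} be the map sending y to the point y' with y'_j = y_j for j ≠ k and y'_k = π/2 − ∑_{i=1}^{n+1} y_i, and let R_k^* : ℝ^{n+1} → ℝ^{n+1} be the linear map with (R_k^* x)_i = x_i − x_k for i ≠ k and (R_k^* x)_k = −x_k. Then R_k maps Ω to Ω and, for every y ∈ Ω, the gradient of F satisfies ∇F(R_k(y)) = R_k^*(∇F(y)). -/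
open Real Finset

theorem stmt_4 (n : ℕ) (hn : 1 ≤ n) (k : Fin (n+1))
    (Ω : Set (Fin (n+1) → ℝ))
    (hΩ : Ω = {y | (∀ j, 0 < y j) ∧ ∑ j, y j < π/2})
    (F : (Fin (n+1) → ℝ) → ℝ)
    (hF : ∀ y, F y = (cos (∑ j, y j) * ∏ j, sin (y j)) ^ ((1:ℝ)/((n:ℝ)+1)))
    (R : (Fin (n+1) → ℝ) → (Fin (n+1) → ℝ))
    (hR : ∀ y, R y = Function.update y k (π/2 - ∑ i, y i))
    (Rstar : (Fin (n+1) → ℝ) → (Fin (n+1) → ℝ))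
    (hRstar : ∀ x i, Rstar x i = if i = k then -x k else x i - x k) :
    Set.MapsTo R Ω Ω ∧
    ∀ y ∈ Ω, (fun j => fderiv ℝ F (R y) (Pi.single j 1)) =
      Rstar (fun j => fderiv ℝ F y (Pi.single j 1)) := by
  have hsumR : ∀ y, ∑ i, R y i = π/2 - y k := by
    intro y
    rw [hR, Finset.sum_update_of_mem (Finset.mem_univ k),
      ← Finset.add_sum_erase Finset.univ y (Finset.mem_univ k), Finset.sdiff_singleton_eq_erase]
    ring
  have hRk : ∀ y, R y k = π/2 - ∑ i, y i := by
    intro y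
    rw [hR, Function.update_self]
  have hRj : ∀ y j, j ≠ k → R y j = y j := by
    intro y j hj
    rw [hR, Function.update_of_ne hj]
  have hRR : ∀ y, R (R y) = y := by
    intro y
    ext j
    by_cases hj : j = k
    · subst hj
      rw [hRk, hsumR]; ring
    · rw [hRj _ _ hj, hRj _ _ hj]
  have hFR : ∀ y, F (R y) = F y := by
    intro y
    rw [hF, hF, hsumR, Real.cos_pi_div_two_sub,
      ← Finset.mul_prod_erase Finset.univ (fun j => sin (R y j)) (Finset.mem_univ k),
      ← Finset.mul_prod_erase Finset.univ (fun j => sin (y j)) (Finset.mem_univ k), hRk,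
      Real.sin_pi_div_two_sub]
    have : ∏ j ∈ Finset.univ.erase k, sin (R y j) = ∏ j ∈ Finset.univ.erase k, sin (y j) := by
      refine Finset.prod_congr rfl fun j hj => ?_
      rw [hRj _ _ (Finset.ne_of_mem_erase hj)]
    rw [this]
    congr 1
    ring
  have hle : ∀ y : Fin (n+1) → ℝ, (∀ j, 0 < y j) → ∀ j, y j ≤ ∑ i, y i := fun y hy j =>
    Finset.single_le_sum (f := y) (fun i _ => (hy i).le) (Finset.mem_univ j)
  refine ⟨?_, ?_⟩
  · intro y hy
    rw [hΩ] at hy ⊢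
    obtain ⟨h1, h2⟩ := hy
    refine ⟨fun j => ?_, ?_⟩
    · by_cases hj : j = k
      · rw [hj, hRk]; linarith
      · rw [hRj _ _ hj]; exact h1 j
    · rw [hsumR]; linarith [h1 k]
  · intro y hy
    rw [hΩ] at hy
    obtain ⟨h1, h2⟩ := hy
    have hpos : 0 < cos (∑ j, y j) * ∏ j, sin (y j) := by
      have h0 : 0 < y k := h1 k
      have := hle y h1
      refine mul_pos (Real.cos_pos_of_mem_Ioo ⟨by linarith [this k, Real.pi_pos], h2⟩)
        (Finset.prod_pos fun j _ => Real.sin_pos_of_pos_of_lt_pi (h1 j) ?_)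
      linarith [this j, Real.pi_pos]
    have hdF : DifferentiableAt ℝ F y := by
      have : F = fun y => (cos (∑ j, y j) * ∏ j, sin (y j)) ^ ((1:ℝ)/((n:ℝ)+1)) := funext hF
      rw [this]
      refine DifferentiableAt.rpow_const ?_ (Or.inl hpos.ne')
      fun_prop
    let L : (Fin (n+1) → ℝ) →L[ℝ] (Fin (n+1) → ℝ) :=
      ContinuousLinearMap.id ℝ _ -
        (ContinuousLinearMap.proj (R := ℝ) (φ := fun _ : Fin (n+1) => ℝ) k +
          ∑ i, ContinuousLinearMap.proj (R := ℝ) (φ := fun _ : Fin (n+1) => ℝ) i).smulRight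
          (Pi.single k (1:ℝ) : Fin (n+1) → ℝ)
    have hL : ∀ x, L x = x - (x k + ∑ i, x i) • (Pi.single k (1:ℝ) : Fin (n+1) → ℝ) := by
      intro x
      simp [L]
    have hRL : R = fun x => L x + (π/2) • (Pi.single k (1:ℝ) : Fin (n+1) → ℝ) := by
      funext x j
      rw [hL]
      by_cases hj : j = k
      · subst hj
        rw [hRk]; simp; ring
      · rw [hRj _ _ hj]; simp [hj]
    have hdR : HasFDerivAt R L (R y) := by
      rw [hRL]
      exact L.hasFDerivAt.add_const _
    have hcomp : HasFDerivAt F ((fderiv ℝ F y).comp L) (R y) := by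
      have h3 : HasFDerivAt F (fderiv ℝ F y) (R (R y)) := by
        rw [hRR]; exact hdF.hasFDerivAt
      have h4 := h3.comp (R y) hdR
      have h5 : F ∘ R = F := funext hFR
      rwa [h5] at h4
    funext j
    rw [hcomp.fderiv, hRstar, ContinuousLinearMap.comp_apply, hL]
    by_cases hj : j = k
    · subst hj
      rw [if_pos rfl, map_sub, map_smul]
      simp
      ring
    · have hk : k ≠ j := fun h => hj h.symm
      rw [if_neg hj, map_sub, map_smul]
      simp [hk]
end

section
/- For every y ∈ Ω, the product of the partial derivatives of F at y satisfies ∏_{j=1}^{n+1} ∂F/∂y_j(y) = ∏_{j=1}^{n+1} cos(2y_j + ∑_{k≠j} y_k) / ( (n+1)^{n+1} · (cos(∑_{k=1}^{n+1} y_k))^{n} ). -/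
open Real Finset

theorem stmt_5 (n : ℕ) (hn : 1 ≤ n)
    (Ω : Set (Fin (n+1) → ℝ))
    (hΩ : Ω = {y | (∀ j, 0 < y j) ∧ ∑ j, y j < π/2})
    (F : (Fin (n+1) → ℝ) → ℝ)
    (hF : ∀ y, F y = (cos (∑ j, y j) * ∏ j, sin (y j)) ^ ((1:ℝ)/((n:ℝ)+1)))
    (y : Fin (n+1) → ℝ) (hy : y ∈ Ω) :
    ∏ j, fderiv ℝ F y (Pi.single j 1) =
      (∏ j, cos (2 * y j + ∑ k ∈ Finset.univ.erase j, y k)) /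
        (((n:ℝ)+1) ^ (n+1) * (cos (∑ k, y k)) ^ n) := by
  subst hΩ
  obtain ⟨hpos, hsum⟩ := hy
  have hle : ∀ j, y j ≤ ∑ k, y k := fun j =>
    Finset.single_le_sum (fun i _ => (hpos i).le) (Finset.mem_univ j)
  have hS0 : 0 < ∑ k, y k := lt_of_lt_of_le (hpos 0) (hle 0)
  have hcos : 0 < cos (∑ k, y k) := cos_pos_of_mem_Ioo ⟨by linarith [pi_pos], hsum⟩
  have hsin : ∀ j, 0 < sin (y j) := fun j =>
    sin_pos_of_pos_of_lt_pi (hpos j) (by linarith [hle j, pi_pos])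
  have hP : 0 < ∏ j, sin (y j) := Finset.prod_pos fun j _ => hsin j
  have hG := mul_pos hcos hP
  have hn1 : (0:ℝ) < (n:ℝ) + 1 := by positivity
  have hFe : F = fun y => (cos (∑ j, y j) * ∏ j, sin (y j)) ^ ((1:ℝ)/((n:ℝ)+1)) := funext hF
  have hproj : ∀ i : Fin (n+1), HasFDerivAt (fun z : Fin (n+1) → ℝ => z i)
      (ContinuousLinearMap.proj (R := ℝ) (φ := fun _ : Fin (n+1) => ℝ) i) y := fun i =>
    hasFDerivAt_apply i y
  have key : ∀ j, fderiv ℝ F y (Pi.single j 1) =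
      F y * (cos (2 * y j + ∑ k ∈ Finset.univ.erase j, y k) /
        (((n:ℝ)+1) * cos (∑ k, y k) * sin (y j))) := by
    intro j
    have h1 := (HasFDerivAt.fun_sum (u := Finset.univ) (fun i _ => hproj i)).cos
    have h2 := HasFDerivAt.finset_prod (u := Finset.univ) (fun i _ => (hproj i).sin)
    have h3 := (h1.fun_mul h2).rpow_const (p := (1:ℝ)/((n:ℝ)+1)) (Or.inl hG.ne')
    rw [← hFe] at h3
    rw [h3.fderiv, hF y, Real.rpow_sub_one hG.ne']
    have e : 2 * y j + ∑ k ∈ Finset.univ.erase j, y k = (∑ k, y k) + y j := by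
      rw [← Finset.add_sum_erase _ _ (Finset.mem_univ j)]; ring
    have e2 : ∏ k, sin (y k) = sin (y j) * ∏ k ∈ Finset.univ.erase j, sin (y k) :=
      (Finset.mul_prod_erase _ _ (Finset.mem_univ j)).symm
    have hQ : 0 < ∏ k ∈ Finset.univ.erase j, sin (y k) := Finset.prod_pos fun j _ => hsin j
    rw [e, cos_add]
    have hs := hsin j
    simp [Pi.single_apply, ContinuousLinearMap.sum_apply]
    generalize (cos (∑ k, y k) * ∏ k, sin (y k)) ^ ((n:ℝ)+1)⁻¹ = R
    rw [e2]
    field_simp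
    try ring
  have hFp : F y ^ (n+1) = cos (∑ j, y j) * ∏ j, sin (y j) := by
    rw [hF, ← Real.rpow_natCast, ← Real.rpow_mul hG.le]
    push_cast
    rw [one_div_mul_cancel hn1.ne', Real.rpow_one]
  simp_rw [key]
  rw [Finset.prod_mul_distrib, Finset.prod_div_distrib, Finset.prod_mul_distrib]
  simp only [Finset.prod_const, Finset.card_univ, Fintype.card_fin]
  rw [hFp, mul_pow, pow_succ (cos _) n]
  field_simp
end

section
/- Suppose y ∈ Ω satisfies 2y_j + ∑_{k≠j} y_k ≤ π/2 for every j = 1,…,n+1. Then ∂F/∂y_j(y) ≥ 0 for every j, and ∏_{j=1}^{n+1} ∂F/∂y_j(y) ≤ 1/(n+1)^{n+1}. -/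
open Real Finset

theorem stmt_6 (n : ℕ) (hn : 1 ≤ n)
    (Ω : Set (Fin (n+1) → ℝ))
    (hΩ : Ω = {y | (∀ j, 0 < y j) ∧ ∑ j, y j < π/2})
    (F : (Fin (n+1) → ℝ) → ℝ)
    (hF : ∀ y, F y = (cos (∑ j, y j) * ∏ j, sin (y j)) ^ ((1:ℝ)/((n:ℝ)+1)))
    (y : Fin (n+1) → ℝ) (hy : y ∈ Ω)
    (hW : ∀ j, 2 * y j + ∑ k ∈ Finset.univ.erase j, y k ≤ π/2) :
    (∀ j, 0 ≤ fderiv ℝ F y (Pi.single j 1)) ∧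
    ∏ j, fderiv ℝ F y (Pi.single j 1) ≤ 1 / ((n:ℝ)+1) ^ (n+1) := by
  subst hΩ
  obtain ⟨hpos, hS⟩ := hy
  have hFe : F = fun y => (cos (∑ j, y j) * ∏ j, sin (y j)) ^ ((1:ℝ)/((n:ℝ)+1)) := funext hF
  have hpi := Real.pi_pos
  have hSj : ∀ j, (∑ k, y k) + y j ≤ π/2 := by
    intro j
    have := hW j
    have h2 := Finset.add_sum_erase Finset.univ y (Finset.mem_univ j)
    linarith
  have hS0 : 0 ≤ ∑ k, y k := Finset.sum_nonneg fun j _ => (hpos j).le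
  have hcS : 0 < cos (∑ k, y k) := Real.cos_pos_of_mem_Ioo ⟨by linarith, hS⟩
  have hsj : ∀ j, 0 < sin (y j) := fun j =>
    Real.sin_pos_of_pos_of_lt_pi (hpos j) (by linarith [hSj j])
  have hP : 0 < ∏ j, sin (y j) := Finset.prod_pos fun j _ => hsj j
  have hG : 0 < cos (∑ j, y j) * ∏ j, sin (y j) := mul_pos hcS hP
  have hc0 : ∀ j, 0 ≤ cos ((∑ k, y k) + y j) := fun j =>
    Real.cos_nonneg_of_mem_Icc ⟨by linarith [hpos j], hSj j⟩
  have hc1 : ∀ j, cos ((∑ k, y k) + y j) ≤ cos (∑ k, y k) := fun j =>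
    Real.cos_le_cos_of_nonneg_of_le_pi hS0 (by linarith [hSj j]) (by linarith [hpos j])
  have hproj : ∀ i, HasFDerivAt (fun z : Fin (n+1) → ℝ => z i)
      (ContinuousLinearMap.proj (R := ℝ) (φ := fun _ : Fin (n+1) => ℝ) i) y := fun i =>
    hasFDerivAt_apply i y
  have hd := ((HasFDerivAt.fun_sum (u := Finset.univ) (fun i _ => hproj i)).cos.fun_mul
    (HasFDerivAt.finsetProd (u := Finset.univ) (fun i _ => (hproj i).sin))).rpow_const
    (p := (1:ℝ)/((n:ℝ)+1)) (Or.inl hG.ne')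
  have hN : (0:ℝ) < (n:ℝ)+1 := by positivity
  have key : ∀ j, fderiv ℝ F y (Pi.single j 1) =
      (1/((n:ℝ)+1)) * ((cos (∑ j, y j) * ∏ j, sin (y j)) ^ ((1:ℝ)/((n:ℝ)+1))) *
        (cos ((∑ k, y k) + y j) / (sin (y j) * cos (∑ k, y k))) := by
    intro j
    have hpe := Finset.mul_prod_erase Finset.univ (fun i => sin (y i)) (Finset.mem_univ j)
    rw [hFe, hd.fderiv, Real.rpow_sub_one hG.ne', Real.cos_add]
    have hs := (hsj j).ne'
    have hc := hcS.ne'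
    have hP' := hP.ne'
    simp [Pi.single_apply]
    rw [← hpe] at hP' ⊢
    have hE := right_ne_zero_of_mul hP'
    field_simp
    try ring
  have hG0 := Real.rpow_pos_of_pos hG ((1:ℝ)/((n:ℝ)+1))
  refine ⟨fun j => ?_, ?_⟩
  · rw [key]
    exact mul_nonneg (by positivity) (div_nonneg (hc0 j) (mul_pos (hsj j) hcS).le)
  · have hprod : ∏ j, cos ((∑ k, y k) + y j) ≤ cos (∑ k, y k) ^ n := by
      calc ∏ j, cos ((∑ k, y k) + y j) ≤ ∏ j : Fin (n+1), cos (∑ k, y k) :=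
            Finset.prod_le_prod (fun j _ => hc0 j) (fun j _ => hc1 j)
        _ = cos (∑ k, y k) ^ (n+1) := by simp
        _ ≤ cos (∑ k, y k) ^ n :=
            pow_le_pow_of_le_one hcS.le (Real.cos_le_one _) (Nat.le_succ n)
    have hpw : ((cos (∑ j, y j) * ∏ j, sin (y j)) ^ ((1:ℝ)/((n:ℝ)+1))) ^ (n+1)
        = cos (∑ j, y j) * ∏ j, sin (y j) := by
      rw [← Real.rpow_natCast, ← Real.rpow_mul hG.le]
      push_cast
      rw [one_div_mul_cancel hN.ne', Real.rpow_one]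
    simp_rw [key]
    simp only [Finset.prod_mul_distrib, Finset.prod_div_distrib,
      Finset.prod_const, Finset.card_univ, Fintype.card_fin]
    rw [hpw, one_pow, mul_assoc]
    refine mul_le_of_le_one_right (by positivity) ?_
    rw [mul_div_assoc', div_le_one (by positivity), pow_succ]
    nlinarith [mul_le_mul_of_nonneg_left hprod hG.le]
end

section
/- Fix j ∈ {1,…,n+1} and let y* ∈ ℝ^{n+1} satisfy y*_j = 0, y*_k > 0 for all k ≠ j, and ∑_{k=1}^{n+1} y*_k < π/2 (so y* lies in the relative interior of the j-th facet of the closure of Ω). Then, as y → y* with y ∈ Ω, the partial derivative ∂F/∂y_j(y) tends to +∞, while for every k ≠ j the partial derivative ∂F/∂y_k(y) tends to 0. -/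
open Real Finset Filter Topology

lemma aux_fderivG (n : ℕ) (y : Fin (n+1) → ℝ) :
    ∃ L : (Fin (n+1) → ℝ) →L[ℝ] ℝ,
      HasFDerivAt (fun y : Fin (n+1) → ℝ => cos (∑ j, y j) * ∏ j, sin (y j)) L y ∧
      ∀ k, L (Pi.single k 1) = cos (∑ j, y j) * ((∏ i ∈ univ.erase k, sin (y i)) * cos (y k))
        - sin (∑ j, y j) * ∏ j, sin (y j) := by
  have hp : ∀ i : Fin (n+1), HasFDerivAt (fun y : Fin (n+1) → ℝ => y i)
      (ContinuousLinearMap.proj (R := ℝ) (φ := fun _ : Fin (n+1) => ℝ) i) y :=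
    fun i => hasFDerivAt_apply i y
  have hs := HasFDerivAt.fun_sum (u := (univ : Finset (Fin (n+1)))) (fun i _ => hp i)
  have hP := HasFDerivAt.finsetProd (u := (univ : Finset (Fin (n+1)))) (fun i _ => (hp i).sin)
  refine ⟨_, hs.cos.mul hP, fun k => ?_⟩
  simp [Pi.single_apply]
  ring

theorem stmt_7 (n : ℕ) (hn : 1 ≤ n)
    (Ω : Set (Fin (n+1) → ℝ))
    (hΩ : Ω = {y | (∀ j, 0 < y j) ∧ ∑ j, y j < π/2})
    (F : (Fin (n+1) → ℝ) → ℝ)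
    (hF : ∀ y, F y = (cos (∑ j, y j) * ∏ j, sin (y j)) ^ ((1:ℝ)/((n:ℝ)+1)))
    (j : Fin (n+1)) (ystar : Fin (n+1) → ℝ)
    (h1 : ystar j = 0) (h2 : ∀ k, k ≠ j → 0 < ystar k)
    (h3 : ∑ k, ystar k < π/2) :
    Tendsto (fun y => fderiv ℝ F y (Pi.single j 1)) (𝓝[Ω] ystar) atTop ∧
    ∀ k, k ≠ j →
      Tendsto (fun y => fderiv ℝ F y (Pi.single k 1)) (𝓝[Ω] ystar) (𝓝 0) := by
  have hpi := Real.pi_pos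
  set p : ℝ := (1:ℝ)/((n:ℝ)+1) with hpdef
  have hn' : (1:ℝ) ≤ n := by exact_mod_cast hn
  have hp0 : 0 < p := by positivity
  have hp1 : p < 1 := by
    rw [hpdef, div_lt_one (by positivity)]; linarith
  set G : (Fin (n+1) → ℝ) → ℝ := fun y => cos (∑ j, y j) * ∏ j, sin (y j) with hG
  have hFG : F = fun y => (G y) ^ p := funext hF
  have hcG : Continuous G := by fun_prop
  have hnn : ∀ k, 0 ≤ ystar k := fun k => by
    by_cases h : k = j
    · rw [h, h1]
    · exact (h2 k h).le
  have hsin : ∀ y : Fin (n+1) → ℝ, (∀ k, 0 ≤ y k) → ∑ k, y k < π/2 → ∀ k, 0 < y k →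
      0 < sin (y k) := fun y hy hs k hk => by
    have := Finset.single_le_sum (f := y) (fun i _ => hy i) (mem_univ k)
    exact sin_pos_of_pos_of_lt_pi hk (by linarith)
  have hcos : ∀ y : Fin (n+1) → ℝ, (∀ k, 0 ≤ y k) → ∑ k, y k < π/2 →
      0 < cos (∑ k, y k) := fun y hy hs => by
    have := Finset.sum_nonneg (s := univ) (f := y) (fun i _ => hy i)
    exact cos_pos_of_mem_Ioo ⟨by linarith, hs⟩
  have hGpos : ∀ y ∈ Ω, 0 < G y := by
    rintro y hy
    rw [hΩ] at hy
    exact mul_pos (hcos y (fun k => (hy.1 k).le) hy.2)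
      (Finset.prod_pos fun i _ => hsin y (fun k => (hy.1 k).le) hy.2 i (hy.1 i))
  have hG0 : G ystar = 0 := by
    have : ∏ i, sin (ystar i) = 0 := Finset.prod_eq_zero (mem_univ j) (by rw [h1, sin_zero])
    simp [hG, this]
  set D : Fin (n+1) → (Fin (n+1) → ℝ) → ℝ := fun k y =>
    cos (∑ j, y j) * ((∏ i ∈ univ.erase k, sin (y i)) * cos (y k))
        - sin (∑ j, y j) * ∏ j, sin (y j) with hD
  have hcD : ∀ k, Continuous (D k) := fun k => by fun_prop
  have hder : ∀ k, ∀ y ∈ Ω, fderiv ℝ F y (Pi.single k 1) = p * (G y) ^ (p - 1) * D k y := by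
    intro k y hy
    obtain ⟨L, hL, hLk⟩ := aux_fderivG n y
    have := (HasFDerivAt.rpow_const (p := p) hL (Or.inl (hGpos y hy).ne')).fderiv
    rw [hFG, this]
    simp [hLk, hD, hG]
  have htG : Tendsto G (𝓝[Ω] ystar) (𝓝 0) := by
    rw [← hG0]; exact hcG.continuousAt.tendsto.mono_left nhdsWithin_le_nhds
  have hmem : ∀ᶠ y in 𝓝[Ω] ystar, y ∈ Ω := self_mem_nhdsWithin
  have htG' : Tendsto G (𝓝[Ω] ystar) (𝓝[>] 0) :=
    tendsto_nhdsWithin_iff.2 ⟨htG, hmem.mono hGpos⟩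
  constructor
  · have hDpos : 0 < D j ystar := by
      have : ∏ i, sin (ystar i) = 0 := Finset.prod_eq_zero (mem_univ j) (by rw [h1, sin_zero])
      simp only [hD, this, h1, cos_zero, mul_zero, sub_zero, mul_one]
      exact mul_pos (hcos _ hnn h3)
        (Finset.prod_pos fun i hi => hsin _ hnn h3 i (h2 i (Finset.ne_of_mem_erase hi)))
    have htD : Tendsto (D j) (𝓝[Ω] ystar) (𝓝 (D j ystar)) :=
      (hcD j).continuousAt.tendsto.mono_left nhdsWithin_le_nhds
    have h4 : Tendsto (fun y => (G y) ^ (p - 1)) (𝓝[Ω] ystar) atTop :=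
      (tendsto_rpow_neg_nhdsGT_zero (by linarith : p - 1 < 0)).comp htG'
    refine ((h4.const_mul_atTop hp0).atTop_mul_pos hDpos htD).congr' ?_
    filter_upwards [hmem] with y hy using (hder j y hy).symm
  · intro k hk
    have hsk : 0 < sin (ystar k) := hsin _ hnn h3 k (h2 k hk)
    have hc := hcos _ hnn h3
    have hq : Tendsto (fun y : Fin (n+1) → ℝ => p * (G y) ^ p *
        (cos (y k) / sin (y k) - sin (∑ i, y i) / cos (∑ i, y i))) (𝓝[Ω] ystar)
        (𝓝 (p * (G ystar) ^ p *
        (cos (ystar k) / sin (ystar k) - sin (∑ i, ystar i) / cos (∑ i, ystar i)))) := by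
      refine Tendsto.mono_left ?_ nhdsWithin_le_nhds
      apply ContinuousAt.tendsto
      refine ContinuousAt.mul (continuousAt_const.mul
        (hcG.continuousAt.rpow_const (Or.inr hp0.le))) (ContinuousAt.sub ?_ ?_)
      · exact ContinuousAt.div (Continuous.continuousAt (by fun_prop)) (Continuous.continuousAt (by fun_prop)) hsk.ne'
      · exact ContinuousAt.div (Continuous.continuousAt (by fun_prop)) (Continuous.continuousAt (by fun_prop)) hc.ne'
    rw [hG0, zero_rpow hp0.ne', mul_zero, zero_mul] at hq
    refine hq.congr' ?_
    filter_upwards [hmem] with y hy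
    rw [hder k y hy]
    have hGy := hGpos y hy
    rw [hΩ] at hy
    have hs1 := hsin y (fun k => (hy.1 k).le) hy.2 k (hy.1 k)
    have hc1 := hcos y (fun k => (hy.1 k).le) hy.2
    have hDG : D k y = G y * (cos (y k) / sin (y k) - sin (∑ i, y i) / cos (∑ i, y i)) := by
      simp only [hD, hG]
      rw [← Finset.mul_prod_erase univ (fun i => sin (y i)) (mem_univ k)]
      field_simp
    rw [hDG, rpow_sub_one hGy.ne']
    field_simp
end

section
/- Let V = {(α,t) ∈ ℝ^n × ℝ : α_i > 0 for all i = 1,…,n and |t|·(1 + ∑_{i=1}^{n} α_i) < π/2}. Then for every j ∈ {1,…,n+1} there exists a C^∞ function H_j : V → ℝ such that H_j(α,t) = ∂F/∂y_j(tα_1,…,tα_n,t) whenever (α,t) ∈ V and t > 0, and such that at t = 0 one has H_j(α,0) = (∏_{k=1}^{n} α_k)^{1/(n+1)} / ((n+1) α_j) for j ≤ n and H_{n+1}(α,0) = (∏_{k=1}^{n} α_k)^{1/(n+1)} / (n+1). (This expresses that the gradient of F extends smoothly across the real blow-up of the coamoeba at the vertex at the origin.) -/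
open Real Finset

lemma sinc_contDiff_aux : ContDiff ℝ (⊤ : ℕ∞) Real.sinc := by
  rw [contDiff_iff_contDiffAt]
  intro x
  by_cases hx : x = 0
  · subst hx
    rw [Real.sinc_eq_dslope]
    obtain ⟨p, hp⟩ := (Real.analyticAt_sin (x := 0))
    have : AnalyticAt ℝ (dslope Real.sin 0) 0 := ⟨_, hp.has_fpower_series_dslope_fslope⟩
    exact this.contDiffAt
  · have h1 : ContDiffAt ℝ (⊤ : ℕ∞) (fun x : ℝ => Real.sin x / x) x :=
      Real.contDiff_sin.contDiffAt.div contDiffAt_id hx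
    refine h1.congr_of_eventuallyEq ?_
    filter_upwards [isOpen_ne.mem_nhds hx] with z hz
    exact Real.sinc_of_ne_zero hz

lemma mul_sinc_aux (x : ℝ) : x * Real.sinc x = Real.sin x := by
  by_cases hx : x = 0
  · simp [hx]
  · rw [Real.sinc_of_ne_zero hx]; field_simp

lemma sinc_pos_aux (x : ℝ) (hx : |x| < π) : 0 < Real.sinc x := by
  by_cases h0 : x = 0
  · simp [h0]
  · rw [Real.sinc_of_ne_zero h0]
    rw [abs_lt] at hx
    rcases lt_or_gt_of_ne h0 with h | h
    · exact div_pos_of_neg_of_neg (Real.sin_neg_of_neg_of_neg_pi_lt h hx.1) h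
    · exact div_pos (Real.sin_pos_of_pos_of_lt_pi h hx.2) h

lemma partial_aux (m : ℕ) (c : ℝ) (y : Fin m → ℝ) (hc : 0 < cos (∑ j, y j))
    (hs : ∀ k, 0 < sin (y k)) (j : Fin m) :
    fderiv ℝ (fun y : Fin m → ℝ => (cos (∑ j, y j) * ∏ j, sin (y j)) ^ c) y (Pi.single j 1)
     = c * (cos (∑ j, y j) * ∏ j, sin (y j)) ^ c *
        (cos (y j) / sin (y j) - sin (∑ j, y j) / cos (∑ j, y j)) := by
  have hP : 0 < cos (∑ j, y j) * ∏ j, sin (y j) := mul_pos hc (prod_pos fun k _ => hs k)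
  have hd : DifferentiableAt ℝ
      (fun y : Fin m → ℝ => (cos (∑ j, y j) * ∏ j, sin (y j)) ^ c) y := by
    have h : DifferentiableAt ℝ (fun y : Fin m → ℝ => cos (∑ j, y j) * ∏ j, sin (y j)) y := by
      fun_prop
    exact h.rpow_const (Or.inl hP.ne')
  have hline : HasDerivAt (fun s : ℝ => y + s • (Pi.single j 1 : Fin m → ℝ)) (Pi.single j 1) 0 := by
    simpa using ((hasDerivAt_id (0:ℝ)).smul_const (Pi.single j 1 : Fin m → ℝ)).const_add y
  have h0 : y + (0:ℝ) • (Pi.single j 1 : Fin m → ℝ) = y := by simp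
  have h1 := HasFDerivAt.comp_hasDerivAt (x := (0:ℝ)) (f := fun s : ℝ => y + s • (Pi.single j 1 : Fin m → ℝ))
    (l := (fun y : Fin m → ℝ => (cos (∑ j, y j) * ∏ j, sin (y j)) ^ c))
    (by rw [h0]; exact hd.hasFDerivAt) hline
  set C := ∏ k ∈ univ.erase j, sin (y k) with hC
  have hprod : ∏ k, sin (y k) = sin (y j) * C := (mul_prod_erase univ _ (mem_univ j)).symm
  have h2 : HasDerivAt (fun s : ℝ => (cos (∑ j, y j + s) * (sin (y j + s) * C)) ^ c)
      ((- sin (∑ j, y j) * (sin (y j) * C) + cos (∑ j, y j) * (cos (y j) * C)) * c *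
        (cos (∑ j, y j) * (sin (y j) * C)) ^ (c - 1)) 0 := by
    have e1 : HasDerivAt (fun s : ℝ => cos (∑ j, y j + s)) (- sin (∑ j, y j)) 0 := by
      simpa using ((hasDerivAt_id (0:ℝ)).const_add (∑ j, y j)).cos
    have e2 : HasDerivAt (fun s : ℝ => sin (y j + s)) (cos (y j)) 0 := by
      simpa using ((hasDerivAt_id (0:ℝ)).const_add (y j)).sin
    have := (e1.mul (e2.mul_const C)).rpow_const (p := c) (Or.inl (by
      simp only [Pi.mul_apply, add_zero]; rw [← hprod]; exact hP.ne'))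
    simpa using this
  have heq : ((fun y : Fin m → ℝ => (cos (∑ j, y j) * ∏ j, sin (y j)) ^ c) ∘
      fun s : ℝ => y + s • (Pi.single j 1 : Fin m → ℝ)) =
      (fun s : ℝ => (cos (∑ j, y j + s) * (sin (y j + s) * C)) ^ c) := by
    funext s
    simp only [Function.comp]
    congr 2
    · congr 1
      simp [sum_add_distrib, Pi.single_apply]
    · rw [← mul_prod_erase univ _ (mem_univ j)]
      congr 1
      · simp
      · apply prod_congr rfl
        intro k hk
        simp [Pi.single_apply, (mem_erase.1 hk).1]
  rw [heq] at h1
  have := h1.unique h2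
  rw [this, hprod]
  rw [hprod] at hP
  rw [rpow_sub_one hP.ne']
  have := (hs j).ne'
  have hC0 : C ≠ 0 := by rintro h; simp [h] at hP
  have := hc.ne'
  field_simp
  ring

theorem stmt_8 (n : ℕ) (hn : 1 ≤ n)
    (F : (Fin (n+1) → ℝ) → ℝ)
    (hF : ∀ y, F y = (cos (∑ j, y j) * ∏ j, sin (y j)) ^ ((1:ℝ)/((n:ℝ)+1)))
    (V : Set ((Fin n → ℝ) × ℝ))
    (hV : V = {p | (∀ i, 0 < p.1 i) ∧ |p.2| * (1 + ∑ i, p.1 i) < π/2})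
    (ι : (Fin n → ℝ) × ℝ → (Fin (n+1) → ℝ))
    (hι : ∀ p i, ι p i = if h : (i : ℕ) < n then p.2 * p.1 ⟨i, h⟩ else p.2) :
    ∀ j : Fin (n+1), ∃ H : (Fin n → ℝ) × ℝ → ℝ,
      ContDiffOn ℝ (⊤ : ℕ∞) H V ∧
      (∀ p ∈ V, 0 < p.2 → H p = fderiv ℝ F (ι p) (Pi.single j 1)) ∧
      (∀ α : Fin n → ℝ, (α, (0:ℝ)) ∈ V →
        H (α, 0) = if h : (j : ℕ) < n
          then (∏ k, α k) ^ ((1:ℝ)/((n:ℝ)+1)) / (((n:ℝ)+1) * α ⟨j, h⟩)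
          else (∏ k, α k) ^ ((1:ℝ)/((n:ℝ)+1)) / ((n:ℝ)+1)) := by
  intro j
  obtain rfl : F = _ := funext hF
  let a : (Fin n → ℝ) × ℝ → Fin (n+1) → ℝ := fun p i => if h : (i : ℕ) < n then p.1 ⟨i, h⟩ else 1
  have ha : ∀ i, ContDiff ℝ (⊤ : ℕ∞) (fun p => a p i) := by
    intro i
    by_cases h : (i : ℕ) < n
    · simp only [a, h, dif_pos]; fun_prop
    · simp only [a, h, dif_neg, not_false_eq_true]; fun_prop
  have hιa : ∀ p i, ι p i = p.2 * a p i := by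
    intro p i
    rw [hι]
    by_cases h : (i : ℕ) < n <;> simp [a, h]
  have hapos : ∀ p ∈ V, ∀ i, 0 < a p i := by
    intro p hp i
    rw [hV] at hp
    by_cases h : (i : ℕ) < n
    · simpa [a, h] using hp.1 _
    · simp [a, h]
  have hasum : ∀ p, ∑ i, a p i = 1 + ∑ i, p.1 i := by
    intro p
    rw [Fin.sum_univ_castSucc, add_comm]
    simp [a]
  have haprod : ∀ p, ∏ i, a p i = ∏ i, p.1 i := by
    intro p
    rw [Fin.prod_univ_castSucc]
    simp [a]
  have hbd : ∀ p ∈ V, |p.2 * ∑ i, a p i| < π / 2 := by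
    intro p hp
    have h1 : 0 ≤ ∑ i, a p i := sum_nonneg fun i _ => (hapos p hp i).le
    rw [abs_mul, abs_of_nonneg h1, hasum]
    rw [hV] at hp
    exact hp.2
  have hbi : ∀ p ∈ V, ∀ i, |p.2 * a p i| < π / 2 := by
    intro p hp i
    refine lt_of_le_of_lt ?_ (hbd p hp)
    rw [abs_mul, abs_mul]
    apply mul_le_mul_of_nonneg_left _ (abs_nonneg _)
    rw [abs_of_pos (hapos p hp i)]
    exact (single_le_sum (f := a p) (fun i _ => (hapos p hp i).le) (mem_univ i)).trans (le_abs_self _)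
  let β : (Fin n → ℝ) × ℝ → Fin (n+1) → ℝ := fun p i => a p i * Real.sinc (p.2 * a p i)
  have hβ : ∀ i, ContDiff ℝ (⊤ : ℕ∞) (fun p => β p i) := fun i =>
    (ha i).mul (sinc_contDiff_aux.comp (contDiff_snd.mul (ha i)))
  have hβpos : ∀ p ∈ V, ∀ i, 0 < β p i := fun p hp i =>
    mul_pos (hapos p hp i) (sinc_pos_aux _ ((hbi p hp i).trans (by linarith [pi_pos])))
  have hsin : ∀ p i, sin (p.2 * a p i) = p.2 * β p i := by
    intro p i
    rw [← mul_sinc_aux]; simp only [β]; ring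
  have hcos : ∀ p ∈ V, 0 < cos (p.2 * ∑ i, a p i) := fun p hp =>
    cos_pos_of_mem_Ioo (abs_lt.1 (hbd p hp) |> fun h => ⟨by linarith [h.1], h.2⟩)
  have hS : ContDiff ℝ (⊤ : ℕ∞) (fun p : (Fin n → ℝ) × ℝ => p.2 * ∑ i, a p i) :=
    contDiff_snd.mul (ContDiff.sum fun i _ => ha i)
  have hG : ∀ p ∈ V, 0 < cos (p.2 * ∑ i, a p i) * ∏ i, β p i := fun p hp =>
    mul_pos (hcos p hp) (prod_pos fun i _ => hβpos p hp i)
  refine ⟨fun p => (1:ℝ)/((n:ℝ)+1) * (cos (p.2 * ∑ i, a p i) * ∏ i, β p i) ^ ((1:ℝ)/((n:ℝ)+1)) *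
    (cos (p.2 * a p j) / β p j - p.2 * (sin (p.2 * ∑ i, a p i) / cos (p.2 * ∑ i, a p i))),
    ?_, ?_, ?_⟩
  · intro p hp
    apply ContDiffAt.contDiffWithinAt
    have g1 : ContDiffAt ℝ (⊤ : ℕ∞)
        (fun p : (Fin n → ℝ) × ℝ => cos (p.2 * ∑ i, a p i) * ∏ i, β p i) p :=
      ((contDiff_cos.comp hS).mul (contDiff_prod fun i _ => hβ i)).contDiffAt
    have g2 : ContDiffAt ℝ (⊤ : ℕ∞) (fun p : (Fin n → ℝ) × ℝ => cos (p.2 * a p j)) p :=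
      (contDiff_cos.comp (contDiff_snd.mul (ha j))).contDiffAt
    have g3 : ContDiffAt ℝ (⊤ : ℕ∞) (fun p : (Fin n → ℝ) × ℝ => sin (p.2 * ∑ i, a p i)) p :=
      (contDiff_sin.comp hS).contDiffAt
    have g4 : ContDiffAt ℝ (⊤ : ℕ∞) (fun p : (Fin n → ℝ) × ℝ => cos (p.2 * ∑ i, a p i)) p :=
      (contDiff_cos.comp hS).contDiffAt
    exact (contDiffAt_const.mul (g1.rpow_const_of_ne (hG p hp).ne')).mul
      ((g2.div (hβ j).contDiffAt (hβpos p hp j).ne').sub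
        (contDiffAt_snd.mul (g3.div g4 (hcos p hp).ne')))
  · intro p hp ht
    have hsum : ∑ i, ι p i = p.2 * ∑ i, a p i := by
      rw [mul_sum]; exact sum_congr rfl fun i _ => hιa p i
    have hprod : ∏ i, sin (ι p i) = p.2 ^ (n+1) * ∏ i, β p i := by
      rw [prod_congr rfl fun i _ => (by rw [hιa, hsin] : sin (ι p i) = p.2 * β p i)]
      simp [prod_mul_distrib]
    rw [partial_aux]
    · rw [hsum, hprod, hιa, hsin, mul_left_comm, mul_rpow (by positivity) (hG p hp).le]
      have : (p.2 ^ (n+1)) ^ ((1:ℝ)/((n:ℝ)+1)) = p.2 := by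
        rw [← rpow_natCast, ← rpow_mul ht.le]
        push_cast
        rw [mul_one_div_cancel (by positivity), rpow_one]
      rw [this]
      have := (hβpos p hp j).ne'
      have := (hcos p hp).ne'
      field_simp
    · rw [hsum]; exact hcos p hp
    · intro k
      rw [hιa, hsin]; exact mul_pos ht (hβpos p hp k)
  · intro α hα
    have hb : ∀ i, β (α, 0) i = a (α, 0) i := by intro i; simp [β]
    simp only [hb, haprod]
    have := hapos _ hα j
    by_cases h : (j : ℕ) < n
    · simp [a, h, mul_inv, div_eq_mul_inv]; ac_rfl
    · simp [a, h]; ring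
end

section
/- For n = 1 and for n = 2, the Hessian of F is negative definite at every point of Ω: for every y ∈ Ω and every nonzero vector v ∈ ℝ^{n+1}, one has ∑_{j,k=1}^{n+1} (∂²F/∂y_j∂y_k)(y) · v_j v_k < 0. In particular, the Jacobian determinant of the gradient map ∇F : Ω → ℝ^{n+1} is nonzero at every point of Ω, so ∇F is a local diffeomorphism. -/
open Real Finset

lemma aux_cauchy (n : ℕ) (w : Fin (n+1) → ℝ) (r : ℝ) (i : Fin (n+1)) (h : 0 ≤ w i * r) :
    (1/((n:ℝ)+1)) * (∑ j, w j - r)^2 ≤ ∑ j, (w j)^2 + r^2 := by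
  have hm : (0:ℝ) < (n:ℝ)+1 := by positivity
  have key := sq_sum_le_card_mul_sum_sq (s := (Finset.univ : Finset (Fin (n+1))))
    (f := fun j => w j - if j = i then r else 0)
  have e1 : ∑ j, (w j - if j = i then r else 0) = ∑ j, w j - r := by
    rw [Finset.sum_sub_distrib]; simp
  have e2 : ∑ j, (w j - if j = i then r else 0)^2 = ∑ j, (w j)^2 + (r^2 - 2 * (w i * r)) := by
    have : ∀ j, (w j - if j = i then r else 0)^2
        = (w j)^2 + if j = i then (r^2 - 2 * (w j * r)) else 0 := by
      intro j; split_ifs <;> ring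
    simp_rw [this]
    rw [Finset.sum_add_distrib]; simp
  rw [e1, e2] at key
  simp only [Finset.card_univ, Fintype.card_fin, Nat.cast_add, Nat.cast_one] at key
  rw [one_div, inv_mul_le_iff₀ hm]
  nlinarith

lemma aux_form (n : ℕ) (c v : Fin (n+1) → ℝ) (t : ℝ) (hc : ∀ j, 0 < c j) (ht : 0 ≤ t)
    (hv : v ≠ 0) :
    (1/((n:ℝ)+1)) * (∑ j, (c j - t) * v j)^2 - ∑ j, (1 + c j ^ 2) * (v j)^2
      - (1 + t^2) * (∑ j, v j)^2 < 0 := by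
  have ⟨i, hi⟩ : ∃ i, 0 ≤ v i * ∑ j, v j := by
    by_contra! hcon
    have : ∑ i, v i * ∑ j, v j < 0 :=
      Finset.sum_neg (fun i _ => hcon i) Finset.univ_nonempty
    rw [← Finset.sum_mul] at this
    nlinarith [mul_self_nonneg (∑ j, v j)]
  have h1 := aux_cauchy n (fun j => c j * v j) (t * ∑ j, v j) i (by
    have := mul_nonneg (mul_nonneg (hc i).le ht) hi
    calc (0:ℝ) ≤ _ := this
      _ = _ := by ring)
  have e : ∑ j, (c j - t) * v j = ∑ j, c j * v j - t * ∑ j, v j := by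
    rw [Finset.mul_sum, ← Finset.sum_sub_distrib]
    exact Finset.sum_congr rfl fun j _ => by ring
  have e2 : ∑ j, (1 + c j ^ 2) * (v j)^2 = ∑ j, (v j)^2 + ∑ j, (c j * v j)^2 := by
    rw [← Finset.sum_add_distrib]
    exact Finset.sum_congr rfl fun j _ => by ring
  have hpos : 0 < ∑ j, (v j)^2 := by
    obtain ⟨k, hk⟩ := Function.ne_iff.mp hv
    exact Finset.sum_pos' (fun _ _ => sq_nonneg _) ⟨k, Finset.mem_univ _, by
      have : v k ≠ 0 := hk
      positivity⟩
  rw [e, e2]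
  nlinarith [sq_nonneg (∑ j, v j)]

lemma aux_facts (n : ℕ) (y : Fin (n+1) → ℝ) (hy : (∀ j, 0 < y j) ∧ ∑ j, y j < π/2) :
    0 < cos (∑ j, y j) ∧ 0 ≤ sin (∑ j, y j) ∧ ∀ j, 0 < sin (y j) ∧ 0 < cos (y j) := by
  have hS : 0 ≤ ∑ j, y j := Finset.sum_nonneg fun j _ => (hy.1 j).le
  have := pi_pos
  refine ⟨cos_pos_of_mem_Ioo ⟨by linarith, hy.2⟩,
    sin_nonneg_of_nonneg_of_le_pi hS (by linarith [hy.2]), fun j => ?_⟩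
  have hle : y j ≤ ∑ j, y j :=
    Finset.single_le_sum (f := y) (fun j _ => (hy.1 j).le) (Finset.mem_univ j)
  exact ⟨sin_pos_of_pos_of_lt_pi (hy.1 j) (by linarith [hy.2]),
    cos_pos_of_mem_Ioo ⟨by linarith [hy.1 j], by linarith [hy.2]⟩⟩

lemma aux_open (n : ℕ) : IsOpen {y : Fin (n+1) → ℝ | (∀ j, 0 < y j) ∧ ∑ j, y j < π/2} := by
  apply IsOpen.inter
  · have : {y : Fin (n+1) → ℝ | ∀ j, 0 < y j} = ⋂ j, {y | 0 < y j} := by ext; simp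
    change IsOpen {y : Fin (n+1) → ℝ | ∀ j, 0 < y j}
    rw [this]
    exact isOpen_iInter_of_finite fun j => isOpen_lt continuous_const (continuous_apply j)
  · exact isOpen_lt (f := fun y : Fin (n+1) → ℝ => ∑ j, y j) (by fun_prop) continuous_const

noncomputable def auxSig (n : ℕ) : (Fin (n+1) → ℝ) →L[ℝ] ℝ :=
  ∑ j, ContinuousLinearMap.proj (R := ℝ) (φ := fun _ : Fin (n+1) => ℝ) j

lemma auxSig_single (n : ℕ) (k : Fin (n+1)) : auxSig n (Pi.single k 1) = 1 := by
  simp [auxSig]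

lemma aux_sum (n : ℕ) (y : Fin (n+1) → ℝ) :
    HasFDerivAt (fun z : Fin (n+1) → ℝ => ∑ j, z j) (auxSig n) y := by
  unfold auxSig
  exact HasFDerivAt.fun_sum fun j _ => hasFDerivAt_apply j y

lemma aux_first (n : ℕ) (F : (Fin (n+1) → ℝ) → ℝ)
    (hF : ∀ y, F y = (cos (∑ j, y j) * ∏ j, sin (y j)) ^ ((1:ℝ)/((n:ℝ)+1)))
    (y : Fin (n+1) → ℝ) (hy : (∀ j, 0 < y j) ∧ ∑ j, y j < π/2) :
    0 < F y ∧ ∃ F' : (Fin (n+1) → ℝ) →L[ℝ] ℝ, HasFDerivAt F F' y ∧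
      ∀ k, F' (Pi.single k 1) = F y * ((1/((n:ℝ)+1)) *
        (cos (y k) / sin (y k) - sin (∑ j, y j) / cos (∑ j, y j))) := by
  have hE : ∀ z : Fin (n+1) → ℝ, ((∀ j, 0 < z j) ∧ ∑ j, z j < π/2) →
      F z = exp ((log (cos (∑ j, z j)) + ∑ j, log (sin (z j))) * (1/((n:ℝ)+1))) := by
    intro z hz
    obtain ⟨h1, h2, h3⟩ := aux_facts n z hz
    rw [hF, rpow_def_of_pos (mul_pos h1 (Finset.prod_pos fun j _ => (h3 j).1)),
      log_mul h1.ne' (Finset.prod_pos fun j _ => (h3 j).1).ne',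
      log_prod (fun j _ => (h3 j).1.ne')]
  obtain ⟨h1, h2, h3⟩ := aux_facts n y hy
  refine ⟨by rw [hE y hy]; exact exp_pos _, ?_⟩
  have hd := (((((aux_sum n y).cos.log h1.ne').fun_add
    (HasFDerivAt.fun_sum (u := Finset.univ) fun j _ =>
      ((hasFDerivAt_apply (𝕜 := ℝ) j y).sin.log (h3 j).1.ne'))).mul_const (1/((n:ℝ)+1)))).exp
  have hev : F =ᶠ[nhds y] fun z => exp ((log (cos (∑ j, z j)) + ∑ j, log (sin (z j)))
      * (1/((n:ℝ)+1))) :=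
    Filter.eventually_of_mem ((aux_open n).mem_nhds hy) hE
  refine ⟨_, hd.congr_of_eventuallyEq hev, fun k => ?_⟩
  rw [← hE y hy]
  simp [auxSig_single, Pi.single_apply]
  ring

lemma aux_second (n : ℕ) (F : (Fin (n+1) → ℝ) → ℝ)
    (hF : ∀ y, F y = (cos (∑ j, y j) * ∏ j, sin (y j)) ^ ((1:ℝ)/((n:ℝ)+1)))
    (y : Fin (n+1) → ℝ) (hy : (∀ j, 0 < y j) ∧ ∑ j, y j < π/2) (j k : Fin (n+1)) :
    fderiv ℝ (fun z => fderiv ℝ F z (Pi.single j 1)) y (Pi.single k 1) =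
      F y * (1/((n:ℝ)+1)) * ((1/((n:ℝ)+1)) *
        (cos (y j) / sin (y j) - sin (∑ j, y j) / cos (∑ j, y j)) *
        (cos (y k) / sin (y k) - sin (∑ j, y j) / cos (∑ j, y j))
        - (if j = k then 1 + (cos (y j) / sin (y j))^2 else 0)
        - (1 + (sin (∑ j, y j) / cos (∑ j, y j))^2)) := by
  have hev : (fun z => fderiv ℝ F z (Pi.single j 1)) =ᶠ[nhds y] fun z =>
      F z * ((1/((n:ℝ)+1)) * (cos (z j) / sin (z j) - sin (∑ j, z j) / cos (∑ j, z j))) := by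
    refine Filter.eventually_of_mem ((aux_open n).mem_nhds hy) fun z hz => ?_
    obtain ⟨_, F', h1, h2⟩ := aux_first n F hF z hz
    simp only [h1.fderiv, h2]
  rw [hev.fderiv_eq]
  obtain ⟨_, F', h1, h2⟩ := aux_first n F hF y hy
  obtain ⟨hc, _, h3⟩ := aux_facts n y hy
  have hs := (h3 j).1
  have dcot : HasDerivAt (fun x => cos x / sin x) (-(1 + (cos (y j) / sin (y j))^2)) (y j) := by
    refine ((hasDerivAt_cos (y j)).fun_div (hasDerivAt_sin (y j)) hs.ne').congr_deriv ?_
    field_simp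
    ring
  have dtan : HasDerivAt (fun x => sin x / cos x)
      (1 + (sin (∑ j, y j) / cos (∑ j, y j))^2) (∑ j, y j) := by
    refine ((hasDerivAt_sin (∑ j, y j)).fun_div (hasDerivAt_cos (∑ j, y j)) hc.ne').congr_deriv ?_
    field_simp
    ring
  have hcot := dcot.comp_hasFDerivAt y (hasFDerivAt_apply (𝕜 := ℝ) j y)
  have htan := dtan.comp_hasFDerivAt y (aux_sum n y)
  have hd := h1.fun_mul ((hcot.fun_sub htan).const_mul (1/((n:ℝ)+1)))
  have hd' := hd.fderiv
  simp only [Function.comp_def] at hd'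
  rw [hd']
  simp only [_root_.add_apply, _root_.smul_apply,
    _root_.sub_apply, h2, auxSig_single, ContinuousLinearMap.proj_apply,
    Pi.single_apply, smul_eq_mul]
  split_ifs <;> ring

theorem stmt_9 (n : ℕ) (hn : n = 1 ∨ n = 2)
    (Ω : Set (Fin (n+1) → ℝ))
    (hΩ : Ω = {y | (∀ j, 0 < y j) ∧ ∑ j, y j < π/2})
    (F : (Fin (n+1) → ℝ) → ℝ)
    (hF : ∀ y, F y = (cos (∑ j, y j) * ∏ j, sin (y j)) ^ ((1:ℝ)/((n:ℝ)+1))) :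
    ∀ y ∈ Ω,
      (∀ v : Fin (n+1) → ℝ, v ≠ 0 →
        ∑ j, ∑ k,
          fderiv ℝ (fun z => fderiv ℝ F z (Pi.single j 1)) y (Pi.single k 1) * v j * v k
          < 0) ∧
      Matrix.det (Matrix.of fun j k : Fin (n+1) =>
        fderiv ℝ (fun z => fderiv ℝ F z (Pi.single j 1)) y (Pi.single k 1)) ≠ 0 := by
  intro y hy
  rw [hΩ] at hy
  have main : ∀ v : Fin (n+1) → ℝ, v ≠ 0 →
        ∑ j, ∑ k,
          fderiv ℝ (fun z => fderiv ℝ F z (Pi.single j 1)) y (Pi.single k 1) * v j * v k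
          < 0 := by
    intro v hv
    obtain ⟨hFp, _⟩ := aux_first n F hF y hy
    obtain ⟨hc, hs, h3⟩ := aux_facts n y hy
    simp_rw [aux_second n F hF y hy]
    have hq := aux_form n (fun j => cos (y j) / sin (y j)) v (sin (∑ j, y j) / cos (∑ j, y j))
      (fun j => div_pos (h3 j).2 (h3 j).1) (div_nonneg hs hc.le) hv
    have hcoef : 0 < F y * (1/((n:ℝ)+1)) := by positivity
    refine lt_of_eq_of_lt ?_ (mul_neg_of_pos_of_neg hcoef hq)
    generalize sin (∑ j, y j) / cos (∑ j, y j) = t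
    generalize F y * (1/((n:ℝ)+1)) = A
    generalize 1/((n:ℝ)+1) = B
    generalize hcc : (fun j => cos (y j) / sin (y j)) = c
    have hcc' : ∀ j, cos (y j) / sin (y j) = c j := fun j => by rw [← hcc]
    simp only [hcc']
    have e : ∀ j, ∑ k, A * (B * (c j - t) * (c k - t) - (if j = k then 1 + c j ^ 2 else 0)
        - (1 + t^2)) * v j * v k
        = A * (B * ((c j - t) * v j * ∑ k, (c k - t) * v k) - (1 + c j ^ 2) * v j ^ 2
          - (1 + t^2) * (v j * ∑ k, v k)) := by
      intro j
      have e2 : (1 + c j ^ 2) * v j ^ 2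
          = ∑ k, if j = k then (1 + c j ^ 2) * v j * v k else 0 := by
        simp; ring
      rw [e2]
      simp only [Finset.mul_sum, ← Finset.sum_sub_distrib]
      refine Finset.sum_congr rfl fun k _ => ?_
      split_ifs <;> ring
    simp only [e]
    rw [← Finset.mul_sum, Finset.sum_sub_distrib, Finset.sum_sub_distrib, ← Finset.mul_sum,
      ← Finset.mul_sum, ← Finset.sum_mul, ← Finset.sum_mul, sq (∑ j, v j),
      sq (∑ j, (c j - t) * v j)]
  refine ⟨main, fun hdet => ?_⟩
  obtain ⟨v, hv, hMv⟩ := Matrix.exists_mulVec_eq_zero_iff.mpr hdet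
  have h := main v hv
  have h0 : ∑ j, ∑ k,
      fderiv ℝ (fun z => fderiv ℝ F z (Pi.single j 1)) y (Pi.single k 1) * v j * v k = 0 := by
    refine Finset.sum_eq_zero fun j _ => ?_
    have := congrFun hMv j
    simp only [Matrix.mulVec, dotProduct, Matrix.of_apply, Pi.zero_apply] at this
    calc _ = v j * ∑ k, fderiv ℝ (fun z => fderiv ℝ F z (Pi.single j 1)) y (Pi.single k 1)
          * v k := by
          rw [Finset.mul_sum]
          exact Finset.sum_congr rfl fun k _ => by ring
      _ = 0 := by rw [this, mul_zero]
  linarith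
end

section
/- Let n = 1, so Ω = {(y_1,y_2) ∈ ℝ² : y_1 > 0, y_2 > 0, y_1 + y_2 < π/2} and F(y_1,y_2) = (cos(y_1+y_2)·sin y_1·sin y_2)^{1/2}. Define the three closed subsets of ℝ²: ℋ_0 = {x : x_1 ≥ 0, x_2 ≥ 0, x_1 x_2 ≤ 1/4}, ℋ_1 = {x : x_1 ≤ 0, x_2 − x_1 ≥ 0, (−x_1)(x_2 − x_1) ≤ 1/4}, ℋ_2 = {x : x_2 ≤ 0, x_1 − x_2 ≥ 0, (x_1 − x_2)(−x_2) ≤ 1/4}, and let ℋ = ℋ_0 ∪ ℋ_1 ∪ ℋ_2. Then the gradient map ∇F : Ω → ℝ² is injective, its image is exactly the topological interior of ℋ, and it is a local diffeomorphism at every point of Ω; hence ∇F is a diffeomorphism from Ω onto the interior of ℋ. -/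
open Real

namespace S10

def Om : Set (ℝ × ℝ) := {y | 0 < y.1 ∧ 0 < y.2 ∧ y.1 + y.2 < π/2}

noncomputable def R (y : ℝ × ℝ) : ℝ := √(cos (y.1 + y.2) * sin y.1 * sin y.2)

noncomputable def cA (y : ℝ × ℝ) : ℝ := cos y.1 / sin y.1
noncomputable def cB (y : ℝ × ℝ) : ℝ := cos y.2 / sin y.2
noncomputable def cC (y : ℝ × ℝ) : ℝ := sin (y.1 + y.2) / cos (y.1 + y.2)

noncomputable def G (y : ℝ × ℝ) : ℝ × ℝ :=
  (R y * (cA y - cC y) / 2, R y * (cB y - cC y) / 2)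

abbrev dx : ℝ × ℝ →L[ℝ] ℝ := ContinuousLinearMap.fst ℝ ℝ ℝ
abbrev dy : ℝ × ℝ →L[ℝ] ℝ := ContinuousLinearMap.snd ℝ ℝ ℝ

lemma pos {y : ℝ × ℝ} (hy : y ∈ Om) :
    0 < sin y.1 ∧ 0 < sin y.2 ∧ 0 < cos (y.1 + y.2) ∧ 0 < cos y.1 ∧ 0 < cos y.2 ∧
      0 < sin (y.1 + y.2) := by
  obtain ⟨h1, h2, h3⟩ := hy
  have := pi_pos
  refine ⟨sin_pos_of_pos_of_lt_pi h1 (by linarith), sin_pos_of_pos_of_lt_pi h2 (by linarith),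
    cos_pos_of_mem_Ioo ⟨by linarith, by linarith⟩, cos_pos_of_mem_Ioo ⟨by linarith, by linarith⟩,
    cos_pos_of_mem_Ioo ⟨by linarith, by linarith⟩, sin_pos_of_pos_of_lt_pi (by linarith) (by linarith)⟩

lemma isOpen_Om : IsOpen Om := by
  have a1 : IsOpen {y : ℝ × ℝ | 0 < y.1} := isOpen_lt (by fun_prop) (by fun_prop)
  have a2 : IsOpen {y : ℝ × ℝ | 0 < y.2} := isOpen_lt (by fun_prop) (by fun_prop)
  have a3 : IsOpen {y : ℝ × ℝ | y.1 + y.2 < π/2} := isOpen_lt (by fun_prop) (by fun_prop)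
  exact a1.inter (a2.inter a3)

lemma R_pos {y : ℝ × ℝ} (hy : y ∈ Om) : 0 < R y := by
  obtain ⟨h1, h2, h3, -⟩ := pos hy
  unfold R; positivity

lemma R_sq {y : ℝ × ℝ} (hy : y ∈ Om) : R y ^ 2 = cos (y.1 + y.2) * sin y.1 * sin y.2 := by
  obtain ⟨h1, h2, h3, -⟩ := pos hy
  unfold R; rw [sq_sqrt]; positivity

lemma hasF_sum (y : ℝ × ℝ) : HasFDerivAt (fun z : ℝ × ℝ => z.1 + z.2) (dx + dy) y :=
  hasFDerivAt_fst.add hasFDerivAt_snd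

lemma hasF_cA {y : ℝ × ℝ} (hy : y ∈ Om) : HasFDerivAt cA ((-(1 + cA y ^ 2)) • dx) y := by
  obtain ⟨h1, h2, h3, -⟩ := pos hy
  have h := ((hasDerivAt_cos y.1).div (hasDerivAt_sin y.1) h1.ne').comp_hasFDerivAt y
    (hasFDerivAt_fst (𝕜 := ℝ) (p := y))
  refine HasFDerivAt.congr_fderiv (f := cA) h ?_
  congr 1
  unfold cA
  field_simp
  ring

lemma hasF_cB {y : ℝ × ℝ} (hy : y ∈ Om) : HasFDerivAt cB ((-(1 + cB y ^ 2)) • dy) y := by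
  obtain ⟨h1, h2, h3, -⟩ := pos hy
  have h := ((hasDerivAt_cos y.2).div (hasDerivAt_sin y.2) h2.ne').comp_hasFDerivAt y
    (hasFDerivAt_snd (𝕜 := ℝ) (p := y))
  refine HasFDerivAt.congr_fderiv (f := cB) h ?_
  congr 1
  unfold cB
  field_simp
  ring

lemma hasF_cC {y : ℝ × ℝ} (hy : y ∈ Om) : HasFDerivAt cC ((1 + cC y ^ 2) • (dx + dy)) y := by
  obtain ⟨h1, h2, h3, -⟩ := pos hy
  have h := ((hasDerivAt_sin (y.1+y.2)).div (hasDerivAt_cos (y.1+y.2)) h3.ne').comp_hasFDerivAt y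
    (hasF_sum y)
  refine HasFDerivAt.congr_fderiv (f := cC) h ?_
  congr 1
  unfold cC
  field_simp
  ring

lemma hasF_R {y : ℝ × ℝ} (hy : y ∈ Om) :
    HasFDerivAt R ((G y).1 • dx + (G y).2 • dy) y := by
  obtain ⟨h1, h2, h3, -⟩ := pos hy
  have hR := R_pos hy
  have hR2 := R_sq hy
  have hc := (hasDerivAt_cos (y.1+y.2)).comp_hasFDerivAt y (hasF_sum y)
  have ha := (hasDerivAt_sin y.1).comp_hasFDerivAt y (hasFDerivAt_fst (𝕜 := ℝ) (p := y))
  have hb := (hasDerivAt_sin y.2).comp_hasFDerivAt y (hasFDerivAt_snd (𝕜 := ℝ) (p := y))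
  have h := ((hc.mul ha).mul hb).sqrt (by simp; exact ⟨⟨h3.ne', h1.ne'⟩, h2.ne'⟩)
  refine h.congr_fderiv ?_
  have e : √(cos (y.1 + y.2) * sin y.1 * sin y.2) = R y := rfl
  ext <;> simp [e, G, cA, cB, cC] <;> field_simp <;> rw [hR2] <;> ring

noncomputable def al (y : ℝ × ℝ) : ℝ := R y * (-1 - (cA y + cC y)^2/4)
noncomputable def ga (y : ℝ × ℝ) : ℝ := R y * (-1 - (cB y + cC y)^2/4)
noncomputable def be (y : ℝ × ℝ) : ℝ :=
  R y * (-1/2 + (cA y * cB y - cA y * cC y - cB y * cC y - cC y ^2)/4)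

noncomputable def D (y : ℝ × ℝ) : ℝ × ℝ →L[ℝ] ℝ × ℝ :=
  (al y • dx + be y • dy).prod (be y • dx + ga y • dy)

lemma hasF_G {y : ℝ × ℝ} (hy : y ∈ Om) : HasFDerivAt G (D y) y := by
  have hA := hasF_cA hy
  have hB := hasF_cB hy
  have hC := hasF_cC hy
  have hR := hasF_R hy
  have h1 := (hR.mul (hA.sub hC)).mul_const (1/2 : ℝ)
  have h2 := (hR.mul (hB.sub hC)).mul_const (1/2 : ℝ)
  have h := h1.prodMk h2
  have e : G = fun y => ((R y * (cA y - cC y)) * (1/2), (R y * (cB y - cC y)) * (1/2)) := by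
    funext y; simp only [G, div_eq_mul_inv, one_mul]
  rw [e]
  refine h.congr_fderiv ?_
  ext <;> simp [D, al, be, ga, G] <;> ring

lemma neg_def {y : ℝ × ℝ} (hy : y ∈ Om) (v : ℝ × ℝ) (hv : v ≠ 0) :
    (D y v).1 * v.1 + (D y v).2 * v.2 < 0 := by
  obtain ⟨h1, h2, h3, h4, h5, h6⟩ := pos hy
  have hR := R_pos hy
  have hA : 0 < cA y := div_pos h4 h1
  have hB : 0 < cB y := div_pos h5 h2
  have hC : 0 < cC y := div_pos h6 h3
  have hS : cA y * cB y * cC y = cA y + cB y + cC y := by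
    unfold cA cB cC
    field_simp
    rw [sin_add, cos_add]
    ring
  obtain ⟨v1, v2⟩ := v
  simp only [D, al, be, ga, ContinuousLinearMap.prod_apply, add_apply,
    smul_apply, ContinuousLinearMap.coe_fst', ContinuousLinearMap.coe_snd',
    smul_eq_mul]
  generalize cA y = A at *
  generalize cB y = B at *
  generalize cC y = C at *
  generalize R y = r at *
  set k := A * B - A * C - B * C - C^2 - 2 with hk
  set P := 4 + (A + C)^2 with hP
  set Q := 4 + (B + C)^2 with hQ
  have hPp : 0 < P := by positivity
  have hdet : P * Q - k^2 = 4 * (3 + 2*A^2+2*B^2+2*C^2+3*(A*B+B*C+C*A)) := by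
    rw [hP, hQ, hk]
    linear_combination (4 * (A + B + C)) * hS
  have hd : 0 < P * Q - k^2 := by rw [hdet]; positivity
  have key : 0 < P * v1^2 - 2 * k * v1 * v2 + Q * v2^2 := by
    have : 0 < P * (P * v1^2 - 2 * k * v1 * v2 + Q * v2^2) := by
      have e : P * (P * v1^2 - 2 * k * v1 * v2 + Q * v2^2)
        = (P * v1 - k * v2)^2 + (P * Q - k^2) * v2^2 := by ring
      rw [e]
      by_cases h0 : v2 = 0
      · subst h0
        have : v1 ≠ 0 := by rintro rfl; exact hv rfl
        have : 0 < (P * v1)^2 := by positivity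
        simpa using this
      · have : 0 < v2^2 := by positivity
        have := mul_pos hd this
        nlinarith [sq_nonneg (P * v1 - k * v2)]
    exact pos_of_mul_pos_right this hPp.le
  have : r * (P * v1^2 - 2 * k * v1 * v2 + Q * v2^2) > 0 := mul_pos hR key
  rw [hP, hQ, hk] at this
  linarith

lemma convex_Om : Convex ℝ Om := by
  rintro x ⟨x1, x2, x3⟩ y ⟨y1, y2, y3⟩ a b ha hb hab
  have key : ∀ p q : ℝ, 0 < p → 0 < q → 0 < a * p + b * q := by
    intro p q hp hq
    rcases ha.eq_or_lt with h | h
    · have : b = 1 := by linarith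
      subst this; rw [← h]; linarith
    · have := mul_pos h hp
      have := mul_nonneg hb hq.le
      linarith
  refine ⟨by simpa using key _ _ x1 y1, by simpa using key _ _ x2 y2, ?_⟩
  have := key _ _ (sub_pos.2 x3) (sub_pos.2 y3)
  have e : b = 1 - a := by linarith
  subst e
  simp
  linarith

lemma inj_G : Set.InjOn G Om := by
  intro y hy z hz hyz
  by_contra hne
  have hv : z - y ≠ 0 := sub_ne_zero.2 (Ne.symm hne)
  set v := z - y with hvd
  have hmem : ∀ t ∈ Set.Icc (0:ℝ) 1, y + t • v ∈ Om := fun t ht => by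
    have := convex_Om.add_smul_sub_mem hy hz ht
    exact this
  have hl : ∀ t : ℝ, HasDerivAt (fun t : ℝ => y + t • v) v t := fun t => by
    simpa using ((hasDerivAt_id t).smul_const v).const_add y
  have hd : ∀ t ∈ Set.Icc (0:ℝ) 1,
      HasDerivAt (fun t : ℝ => (G (y + t • v)).1 * v.1 + (G (y + t • v)).2 * v.2)
      ((D (y + t • v) v).1 * v.1 + (D (y + t • v) v).2 * v.2) t := by
    intro t ht
    have h := (hasF_G (hmem t ht)).comp_hasDerivAt t (hl t)
    have h1 : HasDerivAt (fun t : ℝ => (G (y + t • v)).1) _ t :=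
      (hasFDerivAt_fst (𝕜 := ℝ) (p := G (y + t • v))).comp_hasDerivAt t h
    have h2 : HasDerivAt (fun t : ℝ => (G (y + t • v)).2) _ t :=
      (hasFDerivAt_snd (𝕜 := ℝ) (p := G (y + t • v))).comp_hasDerivAt t h
    exact (h1.mul_const v.1).add (h2.mul_const v.2)
  obtain ⟨c, hc, hc0⟩ := exists_hasDerivAt_eq_zero (zero_lt_one (α := ℝ))
    (fun t ht => (hd t ht).continuousAt.continuousWithinAt)
    (by simp [hvd, hyz]) (fun t ht => hd t (Set.Ioo_subset_Icc_self ht))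
  exact (neg_def (hmem c (Set.Ioo_subset_Icc_self hc)) v hv).ne hc0

noncomputable def P (x : ℝ × ℝ) : ℝ :=
  (x.1 - min 0 (min x.1 x.2)) * (x.2 - min 0 (min x.1 x.2)) +
   (- min 0 (min x.1 x.2)) * (x.1 + x.2 - 2 * min 0 (min x.1 x.2))

lemma P0 {x : ℝ × ℝ} (h1 : 0 ≤ x.1) (h2 : 0 ≤ x.2) : P x = x.1 * x.2 := by
  have : min 0 (min x.1 x.2) = 0 := by simp [h1, h2]
  rw [P, this]; ring

lemma P1 {x : ℝ × ℝ} (h1 : x.1 ≤ 0) (h2 : 0 ≤ x.2 - x.1) : P x = (-x.1) * (x.2 - x.1) := by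
  have : min 0 (min x.1 x.2) = x.1 := by
    rw [min_eq_left (by linarith : x.1 ≤ x.2), min_eq_right h1]
  rw [P, this]; ring

lemma P2 {x : ℝ × ℝ} (h1 : x.2 ≤ 0) (h2 : 0 ≤ x.1 - x.2) : P x = (x.1 - x.2) * (-x.2) := by
  have : min 0 (min x.1 x.2) = x.2 := by
    rw [min_eq_right (by linarith : x.2 ≤ x.1), min_eq_right h1]
  rw [P, this]; ring

lemma sectors (x : ℝ × ℝ) : (0 ≤ x.1 ∧ 0 ≤ x.2) ∨ (x.1 ≤ 0 ∧ 0 ≤ x.2 - x.1) ∨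
    (x.2 ≤ 0 ∧ 0 ≤ x.1 - x.2) := by
  grind

def H : Set (ℝ × ℝ) := {x | 0 ≤ x.1 ∧ 0 ≤ x.2 ∧ x.1 * x.2 ≤ 1/4} ∪
  {x | x.1 ≤ 0 ∧ 0 ≤ x.2 - x.1 ∧ (-x.1) * (x.2 - x.1) ≤ 1/4} ∪
  {x | x.2 ≤ 0 ∧ 0 ≤ x.1 - x.2 ∧ (x.1 - x.2) * (-x.2) ≤ 1/4}

lemma H_eq : H = {x | P x ≤ 1/4} := by
  ext x
  constructor
  · rintro ((⟨h1, h2, h3⟩ | ⟨h1, h2, h3⟩) | ⟨h1, h2, h3⟩)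
    · simpa [P0 h1 h2] using h3
    · simpa [P1 h1 h2] using h3
    · simpa [P2 h1 h2] using h3
  · intro h
    have h : P x ≤ 1/4 := h
    rcases sectors x with ⟨h1, h2⟩ | ⟨h1, h2⟩ | ⟨h1, h2⟩
    · exact Or.inl (Or.inl ⟨h1, h2, by rwa [P0 h1 h2] at h⟩)
    · exact Or.inl (Or.inr ⟨h1, h2, by rwa [P1 h1 h2] at h⟩)
    · exact Or.inr ⟨h1, h2, by rwa [P2 h1 h2] at h⟩

lemma P_smul (t : ℝ) (ht : 0 ≤ t) (x : ℝ × ℝ) : P (t • x) = t^2 * P x := by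
  have : min 0 (min (t * x.1) (t * x.2)) = t * min 0 (min x.1 x.2) := by
    rw [mul_min_of_nonneg _ _ ht, mul_min_of_nonneg _ _ ht, mul_zero]
  simp only [P, Prod.smul_fst, Prod.smul_snd, smul_eq_mul, this]
  ring

lemma int_H : interior H = {x | P x < 1/4} := by
  apply Set.Subset.antisymm
  · intro x hx
    have hc : Filter.Tendsto (fun t : ℝ => t • x) (nhds 1) (nhds x) := by
      have : Continuous (fun t : ℝ => t • x) := by fun_prop
      simpa using this.tendsto 1
    have h : ∀ᶠ t : ℝ in nhds 1, t • x ∈ H := hc (mem_interior_iff_mem_nhds.1 hx)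
    have h' := h.filter_mono (nhdsWithin_le_nhds (s := Set.Ioi 1))
    obtain ⟨t, ht, ht1⟩ := (h'.and self_mem_nhdsWithin).exists
    have ht1 : 1 < t := ht1
    rw [H_eq] at ht
    have ht : P (t • x) ≤ 1/4 := ht
    rw [P_smul t (by linarith)] at ht
    show P x < 1/4
    by_contra hcon
    push Not at hcon
    nlinarith
  · apply interior_maximal
    · rw [H_eq]; intro x (hx : P x < 1/4); exact hx.le
    · apply isOpen_lt _ continuous_const
      unfold P; fun_prop

lemma G_fst {y : ℝ × ℝ} (hy : y ∈ Om) :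
    (G y).1 * (2 * R y) = sin y.2 * cos (y.1 + y.2 + y.1) := by
  obtain ⟨h1, h2, h3, -⟩ := pos hy
  have : (G y).1 * (2 * R y) = R y ^ 2 * (cA y - cC y) := by simp only [G]; ring
  rw [this, R_sq hy, cA, cC, cos_add (y.1 + y.2) y.1]
  field_simp

lemma G_snd {y : ℝ × ℝ} (hy : y ∈ Om) :
    (G y).2 * (2 * R y) = sin y.1 * cos (y.1 + y.2 + y.2) := by
  obtain ⟨h1, h2, h3, -⟩ := pos hy
  have : (G y).2 * (2 * R y) = R y ^ 2 * (cB y - cC y) := by simp only [G]; ring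
  rw [this, R_sq hy, cB, cC, cos_add (y.1 + y.2) y.2]
  field_simp

lemma G_dif {y : ℝ × ℝ} (hy : y ∈ Om) :
    ((G y).2 - (G y).1) * (2 * R y) = cos (y.1 + y.2) * sin (y.1 - y.2) := by
  obtain ⟨h1, h2, h3, -⟩ := pos hy
  have : ((G y).2 - (G y).1) * (2 * R y) = R y ^ 2 * (cB y - cA y) := by simp only [G]; ring
  rw [this, R_sq hy, cB, cA, sin_sub]
  field_simp

/-- the common product bound -/
lemma prod_lt {r u v a b c s t : ℝ} (hr : 0 < r) (ha : 0 < a) (hb : 0 < b) (hc : 0 < c)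
    (hr2 : r^2 = c * a * b)
    (hu : u * (2 * r) = b * s) (hv : v * (2 * r) = a * t)
    (hsc : s < c) (ht0 : 0 ≤ t) (ht : t ≤ 1) : u * v < 1/4 := by
  have h : u * v * (4 * r^2) = a * b * (s * t) := by
    have := congrArg₂ (· * ·) hu hv
    linarith
  rw [hr2] at h
  have hst : s * t < c := by
    rcases ht0.eq_or_lt with h0 | h0
    · rw [← h0]; simpa using hc
    · nlinarith
  have hab := mul_pos ha hb
  have : a * b * (u * v * 4 * c) < a * b * c := by nlinarith
  have := lt_of_mul_lt_mul_left this hab.le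
  nlinarith

lemma G_mem {y : ℝ × ℝ} (hy : y ∈ Om) : P (G y) < 1/4 := by
  obtain ⟨h1, h2, h3, -⟩ := pos hy
  have hR := R_pos hy
  have hR2 := R_sq hy
  have e1 := G_fst hy
  have e2 := G_snd hy
  have e3 := G_dif hy
  obtain ⟨a0, b0, c0⟩ := hy
  have hpi := pi_pos
  have f1 : cos (y.1 + y.2 + y.1) = sin (π/2 - y.1 - y.2 - y.1) := by
    rw [← cos_pi_div_two_sub]; congr 1; ring
  have f2 : cos (y.1 + y.2 + y.2) = sin (π/2 - y.1 - y.2 - y.2) := by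
    rw [← cos_pi_div_two_sub]; congr 1; ring
  have f3 : cos (y.1 + y.2) = sin (π/2 - y.1 - y.2) := by
    rw [← cos_pi_div_two_sub]; congr 1; ring
  rw [f1] at e1
  rw [f2] at e2
  rw [f3] at e3 hR2 h3
  set c := π/2 - y.1 - y.2 with hc
  have hcp : 0 < c := by linarith
  have nn : ∀ s : ℝ, 0 ≤ s → s ≤ π/2 → 0 ≤ sin s := fun s h h' =>
    sin_nonneg_of_nonneg_of_le_pi h (by linarith)
  have sgn : ∀ u w : ℝ, u * (2 * R y) = w → 0 ≤ w → 0 ≤ u := fun u w h h' =>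
    nonneg_of_mul_nonneg_left (by rw [h]; exact h') (by positivity : 0 < 2 * R y)
  have lt : ∀ p q : ℝ, -(π/2) ≤ p → q ≤ π/2 → p < q → sin p < sin q := fun p q a b h =>
    sin_lt_sin_of_lt_of_le_pi_div_two a b h
  have hmax : (y.1 ≤ c ∧ y.2 ≤ c) ∨ (c ≤ y.1 ∧ y.2 ≤ y.1) ∨ (c ≤ y.2 ∧ y.1 ≤ y.2) := by grind
  have i1 : sin (y.1 - c) = - sin (c - y.1) := by rw [← sin_neg]; congr 1; ring
  have i2 : sin (y.2 - c) = - sin (c - y.2) := by rw [← sin_neg]; congr 1; ring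
  have i3 : sin (y.2 - y.1) = - sin (y.1 - y.2) := by rw [← sin_neg]; congr 1; ring
  rcases hmax with ⟨m1, m2⟩ | ⟨m1, m2⟩ | ⟨m1, m2⟩
  · have n1 := nn (c - y.1) (by linarith) (by linarith)
    have n2 := nn (c - y.2) (by linarith) (by linarith)
    rw [P0 (sgn _ _ e1 (by positivity)) (sgn _ _ e2 (by positivity))]
    exact prod_lt hR h1 h2 h3 hR2 e1 e2 (lt _ _ (by linarith) (by linarith) (by linarith))
      n2 (sin_le_one _)
  · have n1 := nn (y.1 - c) (by linarith) (by linarith)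
    have n2 := nn (y.1 - y.2) (by linarith) (by linarith)
    have e1' : (-(G y).1) * (2 * R y) = sin y.2 * sin (y.1 - c) := by rw [i1]; linarith
    rw [P1 (neg_nonneg.1 (sgn _ _ e1' (by positivity))) (sgn _ _ e3 (by positivity))]
    exact prod_lt hR h3 h2 h1 (by rw [hR2]; ring) e1' e3
      (lt _ _ (by linarith) (by linarith) (by linarith)) n2 (sin_le_one _)
  · have n1 := nn (y.2 - c) (by linarith) (by linarith)
    have n2 := nn (y.2 - y.1) (by linarith) (by linarith)
    have e2' : (-(G y).2) * (2 * R y) = sin y.1 * sin (y.2 - c) := by rw [i2]; linarith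
    have e3' : ((G y).1 - (G y).2) * (2 * R y) = sin c * sin (y.2 - y.1) := by
      rw [i3]; linarith
    rw [P2 (neg_nonneg.1 (sgn _ _ e2' (by positivity))) (sgn _ _ e3' (by positivity))]
    rw [mul_comm]
    exact prod_lt hR h3 h1 h2 (by rw [hR2]; ring) e2' e3'
      (lt _ _ (by linarith) (by linarith) (by linarith)) n2 (sin_le_one _)

/-- Near a vertex the function beats the linear form. -/
lemma vertex {p q : ℝ} (hp : 0 ≤ p) (hq : 0 ≤ q) (hpq : p * q < 1/4) :
    ∃ s t : ℝ, (s, t) ∈ Om ∧ p * s + q * t < R (s, t) := by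
  obtain ⟨p', q', hp', hq', hpq'⟩ : ∃ p' q' : ℝ, p < p' ∧ q < q' ∧ p' * q' < 1/4 := by
    have hc : Filter.Tendsto (fun e : ℝ => (p + e) * (q + e)) (nhds 0) (nhds (p * q)) := by
      have : Continuous (fun e : ℝ => (p + e) * (q + e)) := by fun_prop
      simpa using this.tendsto 0
    have h := (hc.eventually (gt_mem_nhds hpq)).filter_mono
      (nhdsWithin_le_nhds (s := Set.Ioi 0))
    obtain ⟨e, he, he0⟩ := (h.and self_mem_nhdsWithin).exists
    have he0 : 0 < e := he0
    exact ⟨p + e, q + e, by linarith, by linarith, he⟩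
  have hp0 : 0 < p' := by linarith
  have hq0 : 0 < q' := by linarith
  have hw := mul_pos hp0 hq0
  -- limit of the quotient
  have hs : ∀ k : ℝ, Filter.Tendsto (fun e : ℝ => e⁻¹ * sin (k * e)) (nhdsWithin 0 (Set.Ioi 0))
      (nhds k) := by
    intro k
    have h : HasDerivAt (fun e : ℝ => sin (k * e)) k 0 := by
      have := ((hasDerivAt_id (0:ℝ)).const_mul k).sin
      simpa using this
    have := hasDerivWithinAt_iff_tendsto_slope.1 (h.hasDerivWithinAt (s := Set.Ioi 0))
    simp only [Set.mem_Ioi, lt_self_iff_false, not_false_eq_true, Set.diff_singleton_eq_self] at this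
    refine this.congr (fun e => ?_)
    simp [slope]
  have hcos : Filter.Tendsto (fun e : ℝ => cos (q' * e + p' * e)) (nhdsWithin 0 (Set.Ioi 0))
      (nhds 1) := by
    have : Continuous (fun e : ℝ => cos (q' * e + p' * e)) := by fun_prop
    simpa using (this.tendsto 0).mono_left (nhdsWithin_le_nhds (s := Set.Ioi 0))
  have hl := (hcos.mul (hs q')).mul (hs p')
  have hlt : (2 * (p' * q'))^2 < 1 * q' * p' := by nlinarith
  have hev := hl.eventually (lt_mem_nhds hlt)
  have hsm : Filter.Tendsto (fun e : ℝ => q' * e + p' * e) (nhdsWithin 0 (Set.Ioi 0))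
      (nhds 0) := by
    have : Continuous (fun e : ℝ => q' * e + p' * e) := by fun_prop
    simpa using (this.tendsto 0).mono_left (nhdsWithin_le_nhds (s := Set.Ioi 0))
  have hev2 := hsm.eventually (gt_mem_nhds (by positivity : (0:ℝ) < π/2))
  obtain ⟨e, ⟨h1, h2⟩, h0⟩ := ((hev.and hev2).and self_mem_nhdsWithin).exists
  have h0 : 0 < e := h0
  refine ⟨q' * e, p' * e, ⟨by positivity, by positivity, h2⟩, ?_⟩
  have hle : p * (q' * e) + q * (p' * e) ≤ 2 * (p' * q') * e := by
    have := mul_pos hq0 h0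
    have := mul_pos hp0 h0
    nlinarith
  refine hle.trans_lt ?_
  unfold R
  apply lt_sqrt_of_sq_lt
  have : (2 * (p' * q') * e)^2 = (2 * (p' * q'))^2 * e^2 := by ring
  rw [this]
  have := mul_lt_mul_of_pos_right h1 (by positivity : 0 < e^2)
  refine this.trans_eq ?_
  field_simp

lemma R_perm (s t : ℝ) : R (π/2 - s - t, t) = R (s, t) ∧ R (s, π/2 - s - t) = R (s, t) := by
  have a1 : cos (π/2 - s - t + t) = sin s := by rw [← cos_pi_div_two_sub]; congr 1; ring
  have a2 : sin (π/2 - s - t) = cos (s + t) := by rw [← cos_pi_div_two_sub]; congr 1; ring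
  have a3 : cos (s + (π/2 - s - t)) = sin t := by rw [← cos_pi_div_two_sub]; congr 1; ring
  constructor
  · simp only [R, a1, a2]; congr 1; ring
  · simp only [R, a3, a2]; congr 1; ring

/-- an interior point beating every point on the boundary. -/
lemma beat {x : ℝ × ℝ} (hx : P x < 1/4) : ∃ z ∈ Om, ∀ w : ℝ × ℝ, 0 ≤ w.1 → 0 ≤ w.2 →
    w.1 + w.2 ≤ π/2 → -(x.1 * w.1 + x.2 * w.2) < R z - (x.1 * z.1 + x.2 * z.2) := by
  rcases sectors x with ⟨h1, h2⟩ | ⟨h1, h2⟩ | ⟨h1, h2⟩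
  · rw [P0 h1 h2] at hx
    obtain ⟨s, t, hm, h⟩ := vertex h1 h2 hx
    refine ⟨(s, t), hm, fun w w1 w2 w3 => ?_⟩
    have := mul_nonneg h1 w1
    have := mul_nonneg h2 w2
    simp only
    linarith
  · rw [P1 h1 h2] at hx
    obtain ⟨s, t, ⟨m1, m2, m3⟩, h⟩ := vertex (neg_nonneg.2 h1) h2 hx
    refine ⟨(π/2 - s - t, t), ⟨?_, ?_, ?_⟩, fun w w1 w2 w3 => ?_⟩
    · simp only at *; linarith
    · simp only at *; linarith
    · simp only at *; linarith
    · rw [(R_perm s t).1]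
      have := mul_nonneg h2 w2
      have := mul_nonneg (neg_nonneg.2 h1) (sub_nonneg.2 w3)
      simp only
      nlinarith
  · rw [P2 h1 h2] at hx
    obtain ⟨s, t, ⟨m1, m2, m3⟩, h⟩ := vertex h2 (neg_nonneg.2 h1) hx
    refine ⟨(s, π/2 - s - t), ⟨?_, ?_, ?_⟩, fun w w1 w2 w3 => ?_⟩
    · simp only at *; linarith
    · simp only at *; linarith
    · simp only at *; linarith
    · rw [(R_perm s t).2]
      have := mul_nonneg h2 w1
      have := mul_nonneg (neg_nonneg.2 h1) (sub_nonneg.2 w3)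
      simp only
      nlinarith

lemma surj {x : ℝ × ℝ} (hx : P x < 1/4) : ∃ y ∈ Om, G y = x := by
  obtain ⟨z, hz, hbeat⟩ := beat hx
  let K : Set (ℝ × ℝ) := {w | 0 ≤ w.1 ∧ 0 ≤ w.2 ∧ w.1 + w.2 ≤ π/2}
  have hK : IsCompact K := by
    have hsub : K ⊆ Set.Icc (0:ℝ) (π/2) ×ˢ Set.Icc (0:ℝ) (π/2) := by
      rintro w ⟨h1, h2, h3⟩
      exact ⟨⟨h1, by linarith⟩, ⟨h2, by linarith⟩⟩
    refine (isCompact_Icc.prod isCompact_Icc).of_isClosed_subset ?_ hsub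
    have a1 : IsClosed {y : ℝ × ℝ | 0 ≤ y.1} := isClosed_le (by fun_prop) (by fun_prop)
    have a2 : IsClosed {y : ℝ × ℝ | 0 ≤ y.2} := isClosed_le (by fun_prop) (by fun_prop)
    have a3 : IsClosed {y : ℝ × ℝ | y.1 + y.2 ≤ π/2} := isClosed_le (by fun_prop) (by fun_prop)
    exact a1.inter (a2.inter a3)
  have hOK : Om ⊆ K := fun w ⟨h1, h2, h3⟩ => ⟨h1.le, h2.le, h3.le⟩
  obtain ⟨y, hyK, hy⟩ := hK.exists_isMaxOn ⟨z, hOK hz⟩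
    (f := fun w => R w - (x.1 * w.1 + x.2 * w.2)) (by unfold R; fun_prop)
  have hyO : y ∈ Om := by
    by_contra hno
    have h0 : R y = 0 := by
      obtain ⟨k1, k2, k3⟩ := hyK
      have : y.1 = 0 ∨ y.2 = 0 ∨ y.1 + y.2 = π/2 := by
        by_contra hcon
        push Not at hcon
        exact hno ⟨lt_of_le_of_ne k1 (Ne.symm hcon.1), lt_of_le_of_ne k2 (Ne.symm hcon.2.1),
          lt_of_le_of_ne k3 hcon.2.2⟩
      unfold R
      rcases this with h | h | h <;> simp [h]
    have h1 : R z - (x.1 * z.1 + x.2 * z.2) ≤ R y - (x.1 * y.1 + x.2 * y.2) := hy (hOK hz)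
    have h2 := hbeat y hyK.1 hyK.2.1 hyK.2.2
    linarith
  refine ⟨y, hyO, ?_⟩
  have hloc : IsLocalMax (fun w => R w - (x.1 * w.1 + x.2 * w.2)) y :=
    (hy.on_subset hOK).isLocalMax (isOpen_Om.mem_nhds hyO)
  have hd : HasFDerivAt (fun w => R w - (x.1 * w.1 + x.2 * w.2))
      (((G y).1 • dx + (G y).2 • dy) - (x.1 • dx + x.2 • dy)) y :=
    (hasF_R hyO).sub (((hasFDerivAt_fst (𝕜 := ℝ) (p := y)).const_mul x.1).add
      ((hasFDerivAt_snd (𝕜 := ℝ) (p := y)).const_mul x.2))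
  have h := hloc.hasFDerivAt_eq_zero hd
  have e1 := DFunLike.congr_fun h (1, 0)
  have e2 := DFunLike.congr_fun h (0, 1)
  simp at e1 e2
  ext <;> linarith

lemma equiv_D {y : ℝ × ℝ} (hy : y ∈ Om) :
    ∃ e : (ℝ × ℝ) ≃L[ℝ] (ℝ × ℝ), (e : (ℝ × ℝ) →L[ℝ] (ℝ × ℝ)) = D y := by
  have hi : Function.Injective (D y : ℝ × ℝ →ₗ[ℝ] ℝ × ℝ) := by
    rw [← LinearMap.ker_eq_bot, LinearMap.ker_eq_bot']
    intro v hv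
    by_contra hne
    have := neg_def hy v hne
    have h0 : D y v = 0 := hv
    simp [h0] at this
  refine ⟨(LinearEquiv.ofInjectiveEndo _ hi).toContinuousLinearEquiv, ?_⟩
  ext <;> rfl

end S10

theorem stmt_10
    (Ω : Set (ℝ × ℝ))
    (hΩ : Ω = {y | 0 < y.1 ∧ 0 < y.2 ∧ y.1 + y.2 < π/2})
    (F : ℝ × ℝ → ℝ)
    (hF : ∀ y, F y = (cos (y.1 + y.2) * sin y.1 * sin y.2) ^ ((1:ℝ)/2))
    (g : ℝ × ℝ → ℝ × ℝ)
    (hg : ∀ y, g y = (fderiv ℝ F y (1, 0), fderiv ℝ F y (0, 1)))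
    (H₀ H₁ H₂ : Set (ℝ × ℝ))
    (hH₀ : H₀ = {x | 0 ≤ x.1 ∧ 0 ≤ x.2 ∧ x.1 * x.2 ≤ 1/4})
    (hH₁ : H₁ = {x | x.1 ≤ 0 ∧ 0 ≤ x.2 - x.1 ∧ (-x.1) * (x.2 - x.1) ≤ 1/4})
    (hH₂ : H₂ = {x | x.2 ≤ 0 ∧ 0 ≤ x.1 - x.2 ∧ (x.1 - x.2) * (-x.2) ≤ 1/4}) :
    Set.InjOn g Ω ∧
    g '' Ω = interior (H₀ ∪ H₁ ∪ H₂) ∧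
    ∀ y ∈ Ω, ∃ e : (ℝ × ℝ) ≃L[ℝ] (ℝ × ℝ),
      HasFDerivAt g (e : (ℝ × ℝ) →L[ℝ] (ℝ × ℝ)) y := by

  have hRF : F = S10.R := by
    funext y
    rw [hF, S10.R, sqrt_eq_rpow]
  have hO : Ω = S10.Om := hΩ
  have hHH : H₀ ∪ H₁ ∪ H₂ = S10.H := by rw [hH₀, hH₁, hH₂]; rfl
  have hgG : ∀ y ∈ S10.Om, g y = S10.G y := by
    intro y hy
    rw [hg, hRF, (S10.hasF_R hy).fderiv]
    simp
  rw [hHH, hO, S10.int_H]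
  refine ⟨?_, ?_, ?_⟩
  · intro y hy z hz h
    rw [hgG y hy, hgG z hz] at h
    exact S10.inj_G hy hz h
  · ext x
    constructor
    · rintro ⟨y, hy, rfl⟩
      rw [hgG y hy]
      exact S10.G_mem hy
    · intro hx
      obtain ⟨y, hy, h⟩ := S10.surj hx
      exact ⟨y, hy, (hgG y hy).trans h⟩
  · intro y hy
    obtain ⟨e, he⟩ := S10.equiv_D hy
    refine ⟨e, ?_⟩
    rw [he]
    refine (S10.hasF_G hy).congr_of_eventuallyEq ?_
    filter_upwards [S10.isOpen_Om.mem_nhds hy] with z hz using hgG z hz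
end

section
/- Let s ⊆ ℝ^m be a convex open set and let g : ℝ^m → ℝ^m be differentiable on s. Suppose that for every x ∈ s the derivative Dg(x) is negative definite, i.e. ⟨Dg(x)v, v⟩ < 0 for every nonzero v ∈ ℝ^m (where ⟨·,·⟩ is the Euclidean inner product). Then g is injective on s. (In particular, the gradient of a function with everywhere negative definite Hessian on a convex open set is injective.) -/
open RealInnerProductSpace

theorem stmt_11 (m : ℕ)
    (s : Set (EuclideanSpace ℝ (Fin m)))
    (hconv : Convex ℝ s) (hopen : IsOpen s)
    (g : EuclideanSpace ℝ (Fin m) → EuclideanSpace ℝ (Fin m))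
    (g' : EuclideanSpace ℝ (Fin m) →
      (EuclideanSpace ℝ (Fin m) →L[ℝ] EuclideanSpace ℝ (Fin m)))
    (hderiv : ∀ x ∈ s, HasFDerivAt g (g' x) x)
    (hneg : ∀ x ∈ s, ∀ v : EuclideanSpace ℝ (Fin m), v ≠ 0 → ⟪g' x v, v⟫ < 0) :
    Set.InjOn g s := by
  intro x hx y hy hxy
  by_contra hne
  have hv : y - x ≠ 0 := sub_ne_zero.mpr (Ne.symm hne)
  have hmem : ∀ t ∈ Set.Icc (0 : ℝ) 1, x + t • (y - x) ∈ s := fun t ht =>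
    hconv.add_smul_sub_mem hx hy ht
  have hd : ∀ t ∈ Set.Icc (0 : ℝ) 1,
      HasDerivAt (fun t : ℝ => ⟪g (x + t • (y - x)), y - x⟫)
        ⟪g' (x + t • (y - x)) (y - x), y - x⟫ t := by
    intro t ht
    have hl : HasDerivAt (fun t : ℝ => x + t • (y - x)) (y - x) t := by
      simpa using ((hasDerivAt_id t).smul_const (y - x)).const_add x
    have hc := (hderiv _ (hmem t ht)).comp_hasDerivAt t hl
    simpa using hc.inner ℝ (hasDerivAt_const t (y - x))
  obtain ⟨c, hc, hc0⟩ := exists_hasDerivAt_eq_zero (zero_lt_one' ℝ)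
    (fun t ht => (hd t ht).continuousAt.continuousWithinAt)
    (by simp [hxy])
    (fun t ht => hd t (Set.Ioo_subset_Icc_self ht))
  have := hneg _ (hmem c (Set.Ioo_subset_Icc_self hc)) _ hv
  linarith
end

section
/- Let 0 < b ≤ a ≤ π/2. Then the function t ↦ sin(at)/sin(bt) is differentiable on (0,1) with non-positive derivative there; equivalently, t ↦ sin(at)/sin(bt) is antitone (non-increasing) on (0,1). -/
open Real

theorem aux_sin_ratio (u v : ℝ) (hv : 0 ≤ v) (hvu : v ≤ u) (hu0 : 0 < u) (hu : u ≤ π) :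
    v * sin u ≤ u * sin v := by
  have m0 : (0:ℝ) ∈ Set.Icc 0 π := ⟨le_rfl, pi_pos.le⟩
  have mu : u ∈ Set.Icc 0 π := ⟨hu0.le, hu⟩
  have p1 : 0 ≤ 1 - v / u := by rw [sub_nonneg, div_le_one hu0]; exact hvu
  have p2 : 0 ≤ v / u := by positivity
  have p3 : 1 - v / u + v / u = 1 := by ring
  have h := strictConcaveOn_sin_Icc.concaveOn.2 m0 mu p1 p2 p3
  have e : v / u * u = v := by field_simp
  simp only [smul_eq_mul, sin_zero, mul_zero, zero_add, e] at h
  have h2 := mul_le_mul_of_nonneg_left h hu0.le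
  have e2 : u * (v / u * sin u) = v * sin u := by field_simp
  linarith

theorem stmt_13 (a b : ℝ) (hb : 0 < b) (hba : b ≤ a) (ha : a ≤ π/2) :
    (∀ t ∈ Set.Ioo (0:ℝ) 1,
      DifferentiableAt ℝ (fun t => sin (a * t) / sin (b * t)) t ∧
      deriv (fun t => sin (a * t) / sin (b * t)) t ≤ 0) ∧
    AntitoneOn (fun t => sin (a * t) / sin (b * t)) (Set.Ioo (0:ℝ) 1) := by
  have key : ∀ t ∈ Set.Ioo (0:ℝ) 1,
      DifferentiableAt ℝ (fun t => sin (a * t) / sin (b * t)) t ∧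
      deriv (fun t => sin (a * t) / sin (b * t)) t ≤ 0 := by
    rintro t ⟨h0, h1⟩
    have hs : 0 < sin (b * t) :=
      sin_pos_of_pos_of_lt_pi (by positivity) (by nlinarith [pi_pos])
    have d : ∀ c : ℝ, HasDerivAt (fun t => sin (c * t)) (cos (c * t) * c) t := fun c => by
      simpa using ((hasDerivAt_id t).const_mul c).sin
    have hd := (d a).div (d b) hs.ne'
    refine ⟨hd.differentiableAt, ?_⟩
    have hd' : deriv (fun t => sin (a * t) / sin (b * t)) t = _ := hd.deriv
    rw [hd']
    refine div_nonpos_of_nonpos_of_nonneg ?_ (by positivity)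
    have h := aux_sin_ratio (a * t + b * t) (a * t - b * t) (by nlinarith) (by nlinarith)
      (by nlinarith) (by nlinarith)
    rw [sin_add, sin_sub] at h
    have h3 : t * (cos (a * t) * a * sin (b * t) - sin (a * t) * (cos (b * t) * b)) ≤ 0 := by
      linarith
    exact nonpos_of_mul_nonpos_right h3 h0
  refine ⟨key, antitoneOn_of_deriv_nonpos (convex_Ioo 0 1)
    (fun t ht => (key t ht).1.continuousAt.continuousWithinAt) ?_ ?_⟩
  · rw [interior_Ioo]
    exact fun t ht => (key t ht).1.differentiableWithinAt
  · rw [interior_Ioo]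
    exact fun t ht => (key t ht).2
end

section
/- Let n ≥ 1 and let a ∈ (0, π/2). Then the function ρ(t) = cos((a + π/2)t) / (cos(πt/2))^{n/(n+1)} (real power of the positive number cos(πt/2)) is differentiable on (0,1) and satisfies ρ'(t) < 0 for every t ∈ (0,1). -/
open Real

theorem stmt_14 (n : ℕ) (hn : 1 ≤ n) (a : ℝ) (ha : a ∈ Set.Ioo 0 (π/2))
    (ρ : ℝ → ℝ)
    (hρ : ∀ t, ρ t = cos ((a + π/2) * t) / (cos (π * t / 2)) ^ ((n:ℝ)/((n:ℝ)+1))) :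
    ∀ t ∈ Set.Ioo (0:ℝ) 1, DifferentiableAt ℝ ρ t ∧ deriv ρ t < 0 := by
  rintro t ⟨ht0, ht1⟩
  obtain ⟨ha0, ha1⟩ := ha
  have hpi := Real.pi_pos
  obtain rfl : ρ = fun t => cos ((a + π/2) * t) / (cos (π * t / 2)) ^ ((n:ℝ)/((n:ℝ)+1)) :=
    funext hρ
  have hn0 : (0:ℝ) ≤ n := Nat.cast_nonneg n
  have hp0 : 0 ≤ (n:ℝ)/((n:ℝ)+1) := by positivity
  have hp1 : (n:ℝ)/((n:ℝ)+1) ≤ 1 := by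
    rw [div_le_one (by positivity)]; linarith
  generalize (n:ℝ)/((n:ℝ)+1) = p at *
  have hat : 0 < a * t := mul_pos ha0 ht0
  have hpt : 0 < π * t := mul_pos hpi ht0
  have hpt1 : π * t < π := by nlinarith
  have hat1 : a * t < π / 2 := by nlinarith
  have hC : 0 < cos (π * t / 2) := cos_pos_of_mem_Ioo ⟨by linarith, by linarith⟩
  have hS : 0 < sin ((a + π/2) * t) :=
    sin_pos_of_pos_of_lt_pi (by nlinarith) (by nlinarith)
  have hX : 0 < sin ((a + π/2) * t) * cos (π * t / 2) := mul_pos hS hC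
  have hXY : 0 < sin ((a + π/2) * t) * cos (π * t / 2)
      - cos ((a + π/2) * t) * sin (π * t / 2) := by
    rw [← sin_sub, show (a + π/2) * t - π * t / 2 = a * t by ring]
    exact sin_pos_of_pos_of_lt_pi hat (by linarith)
  have h1 : HasDerivAt (fun t : ℝ => cos ((a + π/2) * t))
      (-sin ((a + π/2) * t) * (a + π/2)) t := by
    simpa using ((hasDerivAt_id t).const_mul (a + π/2)).cos
  have h2 : HasDerivAt (fun t : ℝ => cos (π * t / 2))
      (-sin (π * t / 2) * (π / 2)) t := by
    simpa using (((hasDerivAt_id t).const_mul π).div_const 2).cos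
  have h3 := h2.rpow_const (p := p) (Or.inl hC.ne')
  have hP : 0 < cos (π * t / 2) ^ p := rpow_pos_of_pos hC p
  have h4 := h1.fun_div h3 hP.ne'
  refine ⟨h4.differentiableAt, ?_⟩
  rw [h4.deriv]
  apply div_neg_of_neg_of_pos _ (by positivity)
  rw [rpow_sub_one hC.ne']
  have key : p * (π/2) * (cos ((a + π/2) * t) * sin (π * t / 2))
      < (a + π/2) * (sin ((a + π/2) * t) * cos (π * t / 2)) := by
    have hq0 : 0 ≤ p * (π/2) := by positivity
    have hq1 : p * (π/2) < a + π/2 := by nlinarith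
    generalize cos ((a + π/2) * t) * sin (π * t / 2) = Y at *
    generalize sin ((a + π/2) * t) * cos (π * t / 2) = X at *
    nlinarith [mul_nonneg hq0 (sub_nonneg.2 (sub_pos.1 hXY).le), mul_pos (sub_pos.2 hq1) hX]
  have e : -sin ((a + π/2) * t) * (a + π/2) * cos (π * t / 2) ^ p
      - cos ((a + π/2) * t) * (-sin (π * t / 2) * (π / 2) * p *
        (cos (π * t / 2) ^ p / cos (π * t / 2)))
      = (cos (π * t / 2) ^ p / cos (π * t / 2)) *
        (p * (π/2) * (cos ((a + π/2) * t) * sin (π * t / 2))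
        - (a + π/2) * (sin ((a + π/2) * t) * cos (π * t / 2))) := by
    generalize cos (π * t / 2) ^ p = P at *
    field_simp
    ring
  rw [e]
  exact mul_neg_of_pos_of_neg (div_pos hP hC) (by linarith)
end

section
/- Let a_j, a_k be positive reals with a_k ≤ a_j and a_j + a_k ≤ π/2. Consider the function q(t) = cos((a_k + π/2)t) · sin(a_j t) / ( cos((a_j + π/2)t) · sin(a_k t) ), defined for those t ∈ (0,1) with cos((a_j + π/2)t) ≠ 0. Then at every such t the function q is differentiable and q'(t) ≥ 0. -/
open Real

lemma sinc_aux (p q : ℝ) (hp : 0 ≤ p) (hpq : p ≤ q) (hq : q ≤ π) : p * sin q ≤ q * sin p := by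
  rcases eq_or_lt_of_le (hp.trans hpq) with h | h
  · have : p = 0 := by linarith
    simp [this, ← h]
  · have hc := strictConcaveOn_sin_Icc.concaveOn.2 (show (0:ℝ) ∈ Set.Icc 0 π from ⟨le_rfl, pi_pos.le⟩)
      (show q ∈ Set.Icc 0 π from ⟨h.le, hq⟩)
      (show 0 ≤ 1 - p / q by rw [sub_nonneg, div_le_one h]; exact hpq) (show 0 ≤ p / q by positivity) (by ring)
    simp only [smul_eq_mul, sin_zero, mul_zero, zero_add] at hc
    rw [div_mul_cancel₀ _ h.ne'] at hc
    calc p * sin q = q * (p / q * sin q) := by field_simp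
      _ ≤ q * sin p := by gcongr

lemma G_nonneg (d s z : ℝ) (hd : 0 ≤ d) (hds : d ≤ s) (hs : 0 < s) (hsz : s ≤ z) (hz : z < π / 2) :
    0 ≤ (cos d - cos s) * (d * cos z * sin (s + z) + z * sin d)
      + cos z * cos (s + z) * (d * sin s - s * sin d) := by
  have hcz : 0 < cos z := cos_pos_of_mem_Ioo ⟨by linarith, hz⟩
  have hcs : 0 < cos s := cos_pos_of_mem_Ioo ⟨by linarith, by linarith⟩
  have hss : 0 < sin s := sin_pos_of_pos_of_lt_pi hs (by linarith)
  have hsz' : 0 ≤ sin z := sin_nonneg_of_nonneg_of_le_pi (by linarith) (by linarith)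
  have hsd : 0 ≤ sin d := sin_nonneg_of_nonneg_of_le_pi (by linarith) (by linarith)
  have hX : 0 ≤ sin (s + z) := sin_nonneg_of_nonneg_of_le_pi (by linarith) (by linarith)
  have hcd : 0 ≤ cos d - cos s :=
    sub_nonneg.2 (cos_le_cos_of_nonneg_of_le_pi hd (by linarith) hds)
  have hK : 0 ≤ s * sin d - d * sin s := sub_nonneg.2 (sinc_aux d s hd hds (by linarith))
  have hzd : 0 ≤ (cos d - cos s) * (z * sin d) :=
    mul_nonneg hcd (mul_nonneg (by linarith) hsd)
  have key : 0 ≤ (cos d - cos s) * d * sin (s + z) - cos (s + z) * (s * sin d - d * sin s) := by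
    rcases le_total (cos (s + z)) 0 with hY | hY
    · have h1 := mul_nonneg (mul_nonneg hcd hd) hX
      have h2 := mul_nonneg (neg_nonneg.2 hY) hK
      linarith
    · have h1 := sinc_aux (s - d) (s + d) (by linarith) (by linarith) (by linarith)
      rw [sin_add, sin_sub] at h1
      have h2 : 0 ≤ (cos d - cos s) * d * sin s - cos s * (s * sin d - d * sin s) := by linarith
      have h3 : sin (s + z) * cos s - cos (s + z) * sin s = sin z := by
        rw [← sin_sub]; congr 1; ring
      have h4 := mul_nonneg h2 hX
      have h5 := mul_nonneg hK hsz'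
      rw [← h3] at h5
      refine nonneg_of_mul_nonneg_right (a := sin s) ?_ hss
      linarith
  have := mul_nonneg hcz.le key
  linarith

lemma F_eq (x y z : ℝ) :
    2 * (sin x * sin y * ((y + z) * sin (y + z) * cos (x + z) - (x + z) * sin (x + z) * cos (y + z))
      + cos (x + z) * cos (y + z) * (y * cos y * sin x - x * cos x * sin y))
    = (cos (y - x) - cos (x + y)) * ((y - x) * cos z * sin (x + y + z) + z * sin (y - x))
      + cos z * cos (x + y + z) * ((y - x) * sin (x + y) - (x + y) * sin (y - x)) := by
  obtain ⟨d, hd⟩ : ∃ d, d = y - x := ⟨_, rfl⟩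
  obtain ⟨w, hw⟩ : ∃ w, w = x + y + z := ⟨_, rfl⟩
  have hs : x + y = w - z := by linarith
  have H1 : sin x * sin y = (cos d - cos (w - z)) / 2 := by
    rw [hd, ← hs, cos_sub, cos_add]; ring
  have e5 : cos y * sin x = (sin (w - z) - sin d) / 2 := by
    rw [hd, ← hs, sin_sub, sin_add]; ring
  have e6 : cos x * sin y = (sin (w - z) + sin d) / 2 := by
    rw [hd, ← hs, sin_sub, sin_add]; ring
  have hS : w + z = (x + z) + (y + z) := by linarith
  have hD : d = (y + z) - (x + z) := by linarith
  have e2 : sin (y + z) * cos (x + z) = (sin (w + z) + sin d) / 2 := by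
    rw [hS, hD, sin_sub (y + z), sin_add (x + z)]; ring
  have e3 : sin (x + z) * cos (y + z) = (sin (w + z) - sin d) / 2 := by
    rw [hS, hD, sin_sub (y + z), sin_add (x + z)]; ring
  have e4 : cos (x + z) * cos (y + z) = (cos (w + z) + cos d) / 2 := by
    rw [hS, hD, cos_sub (y + z), cos_add (x + z)]; ring
  have hx : x = (w - z - d) / 2 := by linarith
  have hy : y = (w - z + d) / 2 := by linarith
  rw [mul_assoc (y + z), mul_assoc (x + z), mul_assoc y, mul_assoc x, H1, e2, e3, e4, e5, e6,
    ← hd, ← hw, hs, hx, hy, cos_sub w, cos_add w, sin_sub w, sin_add w]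
  have p1 := sin_sq_add_cos_sq w
  have p2 := sin_sq_add_cos_sq z
  clear hx hy H1 e2 e3 e4 e5 e6 hS hD hs
  generalize sin w = sw at *
  generalize cos w = cw at *
  generalize sin z = sz at *
  generalize cos z = cz at *
  generalize sin d = sd at *
  generalize cos d = cd at *
  clear hd hw
  grind

theorem stmt_15 (aj ak : ℝ) (hk : 0 < ak) (hkj : ak ≤ aj) (hsum : aj + ak ≤ π/2)
    (q : ℝ → ℝ)
    (hq : ∀ t, q t = cos ((ak + π/2) * t) * sin (aj * t) /
        (cos ((aj + π/2) * t) * sin (ak * t))) :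
    ∀ t ∈ Set.Ioo (0:ℝ) 1, cos ((aj + π/2) * t) ≠ 0 →
      DifferentiableAt ℝ q t ∧ 0 ≤ deriv q t := by
  rintro t ⟨ht0, ht1⟩ hc
  have hpi := pi_pos
  have hsk : sin (ak * t) ≠ 0 :=
    (sin_pos_of_pos_of_lt_pi (by positivity) (by nlinarith)).ne'
  have hl : ∀ c : ℝ, HasDerivAt (fun u => c * u) c t := fun c => by
    simpa using (hasDerivAt_id t).const_mul c
  have hq' : q = (((fun x => cos ((ak + π / 2) * x)) * fun x => sin (aj * x)) /
      ((fun x => cos ((aj + π / 2) * x)) * fun x => sin (ak * x))) := funext hq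
  have H := (((hl (ak + π/2)).cos.mul (hl aj).sin).div ((hl (aj + π/2)).cos.mul (hl ak).sin)
    (mul_ne_zero hc hsk))
  rw [← hq'] at H
  refine ⟨H.differentiableAt, ?_⟩
  rw [H.deriv]
  apply div_nonneg _ (sq_nonneg _)
  have hz : π / 2 * t < π / 2 := by nlinarith
  have hG := G_nonneg (aj * t - ak * t) (ak * t + aj * t) (π / 2 * t) (by nlinarith)
    (by nlinarith) (by nlinarith) (by nlinarith) hz
  rw [← F_eq] at hG
  simp only [Pi.mul_apply, add_mul] at hG ⊢
  refine nonneg_of_mul_nonneg_right (a := 2 * t) ?_ (by positivity)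
  refine hG.trans_eq ?_
  ring
end

section
/- Let a, b ∈ (0, π/4). For t ∈ (0,1) set D(t) = cos((π/2 − a)t + a) · sin((π/2 − b)t) · sin(bt) · sin(a(1−t)), which is positive on (0,1), and define η_1(t) = cos((π − a − b)t + a) · sin(bt) · sin(a(1−t)) / D(t)^{2/3}, η_2(t) = cos((π/2 − a + b)t + a) · sin((π/2 − b)t) · sin(a(1−t)) / D(t)^{2/3}, η_3(t) = cos((π/2 − 2a)t + 2a) · sin((π/2 − b)t) · sin(bt) / D(t)^{2/3} (real 2/3 power of a positive real). Then η_1, η_2, η_3 are differentiable on (0,1) and for every t ∈ (0,1) one has η_1'(t) < 0, η_2'(t) < 0 and η_3'(t) > 0. -/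
open Real

lemma aux_gen (U V X Y : ℝ → ℝ) (u v x y t : ℝ) (hU : HasDerivAt U u t) (hV : HasDerivAt V v t)
    (hX : HasDerivAt X x t) (hY : HasDerivAt Y y t)
    (pU : 0 < sin (U t)) (pV : 0 < sin (V t)) (pX : 0 < sin (X t)) (pY : 0 < sin (Y t)) :
    ∃ K > 0, HasDerivAt (fun r => sin (U r - V r) * sin (X r) * sin (Y r) /
      (sin (U r) * sin (V r) * sin (X r) * sin (Y r)) ^ ((2:ℝ)/3))
      (K * (- (v / sin (V t) ^ 2) + u / sin (U t) ^ 2 + 1 / 3 *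
        (cos (V t) / sin (V t) - cos (U t) / sin (U t)) *
        (u * (cos (U t) / sin (U t)) + v * (cos (V t) / sin (V t)) + x * (cos (X t) / sin (X t))
          + y * (cos (Y t) / sin (Y t))))) t := by
  have hD : 0 < sin (U t) * sin (V t) * sin (X t) * sin (Y t) := by positivity
  have hR := rpow_pos_of_pos hD ((2:ℝ)/3)
  refine ⟨sin (U t) * sin (V t) * sin (X t) * sin (Y t) /
    (sin (U t) * sin (V t) * sin (X t) * sin (Y t)) ^ ((2:ℝ)/3), by positivity, ?_⟩
  have h1 := (((hU.sub hV).sin.mul hX.sin).mul hY.sin).div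
    ((((hU.sin.mul hV.sin).mul hX.sin).mul hY.sin).rpow_const (p := (2:ℝ)/3) (Or.inl hD.ne')) hR.ne'
  refine h1.congr_deriv ?_
  simp only [Pi.mul_apply, Pi.sub_apply]
  rw [rpow_sub_one hD.ne', sin_sub, cos_sub]
  have eU := sin_sq_add_cos_sq (U t)
  have eV := sin_sq_add_cos_sq (V t)
  generalize (sin (U t) * sin (V t) * sin (X t) * sin (Y t)) ^ ((2:ℝ)/3) = R at *
  generalize sin (U t) = a at *
  generalize sin (V t) = b at *
  generalize sin (X t) = c at *
  generalize sin (Y t) = d at *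
  generalize cos (U t) = a' at *
  generalize cos (V t) = b' at *
  generalize cos (X t) = c' at *
  generalize cos (Y t) = d' at *
  have e1 : u / a ^ 2 = u * (1 + a' ^ 2 / a ^ 2) := by
    field_simp; linear_combination (-u) * eU
  have e2 : v / b ^ 2 = v * (1 + b' ^ 2 / b ^ 2) := by
    field_simp; linear_combination (-v) * eV
  rw [e1, e2]
  field_simp
  ring

lemma aux_cot (X : ℝ) (h0 : 0 < X) (h1 : X < π / 2) :
    0 < sin X ∧ 0 < cos X / sin X ∧ X * (cos X / sin X) < 1 ∧
      2 / 3 * (cos X / sin X) < X / sin X ^ 2 := by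
  have hs : 0 < sin X := sin_pos_of_pos_of_lt_pi h0 (by linarith)
  have hc : 0 < cos X := cos_pos_of_mem_Ioo ⟨by linarith, h1⟩
  refine ⟨hs, by positivity, ?_, ?_⟩
  · have := lt_tan h0 h1
    rw [tan_eq_sin_div_cos, lt_div_iff₀ hc] at this
    rw [← mul_div_assoc, div_lt_one hs]; exact this
  · have := sin_lt h0
    have := cos_le_one X
    rw [← mul_div_assoc, div_lt_div_iff₀ hs (by positivity)]
    have : cos X * sin X < X := by nlinarith
    nlinarith

lemma aux_cot' (X k c : ℝ) (hc : 0 < c) (hk : 0 < k) (hX : X = c * k) (h1 : X < π / 2) :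
    0 < sin X ∧ 0 < cos X / sin X ∧ 0 < c * (cos X / sin X) ∧ c * (cos X / sin X) < 1 / k ∧
      2 / 3 * (cos X / sin X) * (1 / k) < c / sin X ^ 2 := by
  obtain ⟨q1, q2, q3, q4⟩ := aux_cot X (by rw [hX]; positivity) h1
  refine ⟨q1, q2, by positivity, ?_, ?_⟩
  · rw [lt_div_iff₀ hk]
    calc c * (cos X / sin X) * k = (c * k) * (cos X / sin X) := by ring
      _ < 1 := by rw [← hX]; exact q3
  · rw [mul_one_div, div_lt_iff₀ hk]
    calc _ < X / sin X ^ 2 := q4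
      _ = (c * k) / sin X ^ 2 := by rw [← hX]
      _ = _ := by ring

lemma aux_neg (x y k m P Q p q r s : ℝ) (hx : 0 < x) (hy : 0 < y) (hk : 0 < k) (hm : 0 < m)
    (hP : 2 / 3 * x * m < P) (hQ : 2 / 3 * y * k < Q)
    (hp : 0 < p) (hp' : p < m) (hq : 0 < q) (hq' : q < m)
    (hr : 0 < r) (hr' : r < k) (hs : 0 < s) (hs' : s < k) :
    -Q - P + 1 / 3 * (y - x) * (- p + r + s - q) < 0 := by
  have := mul_pos hx hk
  have := mul_pos hx hm
  have := mul_pos hy hk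
  have := mul_pos hy hm
  rcases le_total x y with h | h
  · have : (y - x) * (- p + r + s - q) ≤ (y - x) * (2 * k) :=
      mul_le_mul_of_nonneg_left (by linarith) (by linarith)
    nlinarith
  · have : (x - y) * (p - r - s + q) ≤ (x - y) * (2 * m) :=
      mul_le_mul_of_nonneg_left (by linarith) (by linarith)
    nlinarith

lemma aux_k (d : ℝ) (h0 : 0 < d) (h1 : d < π / 2) : 0 < π * sin d - 3 * d + d * sin d ^ 2 := by
  have pi1 := pi_gt_d2
  have pi2 := pi_lt_d2
  rcases le_total d 0.8 with h | h
  · have hs : d - d ^ 3 / 4 < sin d := by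
      have := sin_gt_sub_cube h0
      have : 0 < d ^ 3 := by positivity
      linarith
    have hq : d ^ 2 ≤ 0.64 := by nlinarith
    have hq0 : 0 < d ^ 2 := by positivity
    have hs0 : 0 < d - d ^ 3 / 4 := by nlinarith
    have e1 : π * (d - d ^ 3 / 4) < π * sin d := mul_lt_mul_of_pos_left hs (by linarith)
    have e2 : d * (d - d ^ 3 / 4) ^ 2 ≤ d * sin d ^ 2 := by gcongr
    have e3 : 3.14 * (d - d ^ 3 / 4) < π * (d - d ^ 3 / 4) := mul_lt_mul_of_pos_right pi1 hs0
    have e4 : 0 < d * (3.14 * (1 - d ^ 2 / 4) - 3 + d ^ 2 * (1 - d ^ 2 / 4) ^ 2) := by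
      apply mul_pos h0
      generalize d ^ 2 = q at *
      nlinarith [mul_pos hq0 hq0, mul_pos hq0 (mul_pos hq0 hq0)]
    nlinarith
  · obtain ⟨e, he⟩ : ∃ e, e = π / 2 - d := ⟨_, rfl⟩
    have hd : d = π / 2 - e := by linarith
    have he0 : 0 < e := by linarith
    have he1 : e < 0.78 := by linarith
    have hc : sin d = cos e := by rw [hd, sin_pi_div_two_sub]
    have h2 := one_sub_sq_div_two_le_cos (x := e)
    have h3 : sin e ^ 2 < e ^ 2 := by
      have := sin_pos_of_pos_of_lt_pi he0 (by linarith)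
      have := sin_lt he0
      gcongr
    have h4 := sin_sq_add_cos_sq e
    rw [hc]
    have h5 : d * (2 + sin e ^ 2) < d * (2 + e ^ 2) := by gcongr
    have h6 : π * (1 - e ^ 2 / 2) ≤ π * cos e := by gcongr
    have h7 : cos e ^ 2 = 1 - sin e ^ 2 := by linarith
    have h8 : 0 < e * (2 - π * e + e ^ 2) := by
      apply mul_pos he0; nlinarith
    rw [h7]
    rw [hd] at h5 ⊢
    nlinarith

lemma aux_cotanti (x y : ℝ) (h0 : 0 < x) (hxy : x ≤ y) (hy : y ≤ π / 2) :
    y * (cos y / sin y) ≤ x * (cos x / sin x) := by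
  have hd : ∀ z, 0 < z → z ≤ π / 2 → HasDerivAt (fun z => z * (cos z / sin z))
      (1 * (cos z / sin z) + z * ((-sin z * sin z - cos z * cos z) / sin z ^ 2)) z := by
    intro z hz hz'
    have hs : 0 < sin z := sin_pos_of_pos_of_lt_pi hz (by linarith [pi_pos])
    exact (hasDerivAt_id z).mul ((hasDerivAt_cos z).div (hasDerivAt_sin z) hs.ne')
  have := antitoneOn_of_deriv_nonpos (convex_Icc x y) (f := fun z => z * (cos z / sin z))
    (fun z hz => (hd z (by linarith [hz.1]) (by linarith [hz.2])).continuousAt.continuousWithinAt)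
    (fun z hz => by
      rw [interior_Icc] at hz
      exact (hd z (by linarith [hz.1]) (by linarith [hz.2])).differentiableAt.differentiableWithinAt)
    (fun z hz => by
      rw [interior_Icc] at hz
      have hz0 : 0 < z := by linarith [hz.1]
      have hs : 0 < sin z := sin_pos_of_pos_of_lt_pi hz0 (by linarith [hz.2, pi_pos])
      rw [(hd z hz0 (by linarith [hz.2])).deriv]
      have e : 1 * (cos z / sin z) + z * ((-sin z * sin z - cos z * cos z) / sin z ^ 2)
          = (cos z * sin z - z) / sin z ^ 2 := by
        field_simp
        linear_combination (-z) * sin_sq_add_cos_sq z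
      rw [e]
      apply div_nonpos_of_nonpos_of_nonneg _ (by positivity)
      nlinarith [sin_lt hz0, cos_le_one z])
  exact this ⟨le_rfl, hxy⟩ ⟨hxy, le_rfl⟩ hxy

lemma aux_g (d S : ℝ) (h0 : 0 < d) (h1 : d < S) (h2 : S < π / 2) :
    0 ≤ 2 * S * sin S * sin d - 3 * d * (1 - cos S * cos d) + d * sin d ^ 2 := by
  have hsd : 0 < sin d := sin_pos_of_pos_of_lt_pi h0 (by linarith [pi_pos])
  set g : ℝ → ℝ := fun S => 2 * S * sin S * sin d - 3 * d * (1 - cos S * cos d) + d * sin d ^ 2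
    with hg
  have hd : ∀ z, HasDerivAt g ((2 * 1 * sin z + 2 * z * cos z) * sin d -
      3 * d * (-(-sin z * cos d))) z := by
    intro z
    exact ((((((hasDerivAt_id z).const_mul 2).mul (hasDerivAt_sin z)).mul_const (sin d)).sub
      ((((hasDerivAt_cos z).mul_const (cos d)).const_sub 1).const_mul (3 * d))).add_const _)
  have hd' : ∀ z, 0 < z → z ≤ π / 2 → deriv g z = sin z * sin d *
      (2 + 2 * (z * (cos z / sin z)) - 3 * d * (cos d / sin d)) := by
    intro z hz hz'
    have hs : 0 < sin z := sin_pos_of_pos_of_lt_pi hz (by linarith [pi_pos])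
    rw [(hd z).deriv]
    field_simp
  have hdiff : Differentiable ℝ g := fun z => (hd z).differentiableAt
  change 0 ≤ g S
  rcases le_total 0 (2 + 2 * (S * (cos S / sin S)) - 3 * d * (cos d / sin d)) with h | h
  · have := monotoneOn_of_deriv_nonneg (convex_Icc d S) hdiff.continuous.continuousOn
      hdiff.differentiableOn (fun z hz => by
        rw [interior_Icc] at hz
        have hz0 : 0 < z := by linarith [hz.1]
        have hs : 0 < sin z := sin_pos_of_pos_of_lt_pi hz0 (by linarith [hz.2, pi_pos])
        rw [hd' z hz0 (by linarith [hz.2])]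
        have := aux_cotanti z S hz0 hz.2.le h2.le
        exact mul_nonneg (by positivity) (by linarith))
    have h3 := this ⟨le_rfl, h1.le⟩ ⟨h1.le, le_rfl⟩ h1.le
    have h4 : g d = 0 := by
      simp only [hg]
      linear_combination (3 * d) * sin_sq_add_cos_sq d
    linarith
  · have := antitoneOn_of_deriv_nonpos (convex_Icc S (π / 2)) hdiff.continuous.continuousOn
      hdiff.differentiableOn (fun z hz => by
        rw [interior_Icc] at hz
        have hz0 : 0 < z := by linarith [hz.1]
        have hs : 0 < sin z := sin_pos_of_pos_of_lt_pi hz0 (by linarith [hz.2, pi_pos])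
        rw [hd' z hz0 (by linarith [hz.2])]
        have := aux_cotanti S z (by linarith) hz.1.le hz.2.le
        exact mul_nonpos_of_nonneg_of_nonpos (by positivity) (by linarith))
    have h3 := this ⟨le_rfl, h2.le⟩ ⟨h2.le, le_rfl⟩ h2.le
    have h4 : g (π / 2) = π * sin d - 3 * d + d * sin d ^ 2 := by
      simp only [hg, sin_pi_div_two, cos_pi_div_two]
      ring
    have := aux_k d h0 (by linarith)
    linarith

lemma aux_F (A E : ℝ) (hE : 0 < E) (h : E < A) (hS : A + E < π / 2) :
    0 ≤ E / sin E ^ 2 - A / sin A ^ 2 - 1 / 3 * (cos E / sin E - cos A / sin A) *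
      (A * (cos A / sin A) + E * (cos E / sin E)) := by
  have hsE : 0 < sin E := sin_pos_of_pos_of_lt_pi hE (by linarith [pi_pos])
  have hsA : 0 < sin A := sin_pos_of_pos_of_lt_pi (by linarith) (by linarith [pi_pos])
  have hg := aux_g (A - E) (A + E) (by linarith) (by linarith) hS
  rw [sin_add, sin_sub, cos_add, cos_sub] at hg
  have eA := sin_sq_add_cos_sq A
  have eE := sin_sq_add_cos_sq E
  have key : E / sin E ^ 2 - A / sin A ^ 2 - 1 / 3 * (cos E / sin E - cos A / sin A) *
      (A * (cos A / sin A) + E * (cos E / sin E)) =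
      (E * sin A ^ 2 - A * sin E ^ 2 - 1 / 3 * (sin A * cos E - cos A * sin E) *
        (A * cos A * sin E + E * cos E * sin A)) / (sin A ^ 2 * sin E ^ 2) := by
    field_simp
  rw [key]
  apply div_nonneg _ (by positivity)
  generalize sin A = p at *
  generalize sin E = q at *
  have e1 : cos A ^ 2 = 1 - p ^ 2 := by linarith
  have e2 : cos E ^ 2 = 1 - q ^ 2 := by linarith
  generalize cos A = r at *
  generalize cos E = s at *
  have : 2 * (A + E) * (p * s + r * q) * (p * s - r * q) -
      3 * (A - E) * (1 - (r * s - p * q) * (r * s + p * q)) + (A - E) * (p * s - r * q) ^ 2 =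
     6 * (E * p ^ 2 - A * q ^ 2 - 1 / 3 * (p * s - r * q) * (A * r * q + E * s * p)) := by
    have e3 : r ^ 2 * s ^ 2 = (1 - p ^ 2) * (1 - q ^ 2) := by rw [e1, e2]
    ring_nf
    ring_nf at e3
    simp only [e1, e2, e3]
    ring
  linarith

set_option maxHeartbeats 1600000 in
theorem stmt_16 (a b : ℝ) (ha : a ∈ Set.Ioo 0 (π/4)) (hb : b ∈ Set.Ioo 0 (π/4))
    (D η₁ η₂ η₃ : ℝ → ℝ)
    (hD : ∀ t, D t = cos ((π/2 - a) * t + a) * sin ((π/2 - b) * t) *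
        sin (b * t) * sin (a * (1 - t)))
    (h1 : ∀ t, η₁ t = cos ((π - a - b) * t + a) * sin (b * t) * sin (a * (1 - t)) /
        D t ^ ((2:ℝ)/3))
    (h2 : ∀ t, η₂ t = cos ((π/2 - a + b) * t + a) * sin ((π/2 - b) * t) *
        sin (a * (1 - t)) / D t ^ ((2:ℝ)/3))
    (h3 : ∀ t, η₃ t = cos ((π/2 - 2*a) * t + 2*a) * sin ((π/2 - b) * t) *
        sin (b * t) / D t ^ ((2:ℝ)/3)) :
    (∀ t ∈ Set.Ioo (0:ℝ) 1, 0 < D t) ∧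
    ∀ t ∈ Set.Ioo (0:ℝ) 1,
      (DifferentiableAt ℝ η₁ t ∧ DifferentiableAt ℝ η₂ t ∧ DifferentiableAt ℝ η₃ t) ∧
      deriv η₁ t < 0 ∧ deriv η₂ t < 0 ∧ 0 < deriv η₃ t := by
  obtain ⟨ha0, ha1⟩ := ha
  obtain ⟨hb0, hb1⟩ := hb
  have hpi := pi_pos
  obtain ⟨A, hA⟩ : ∃ A : ℝ → ℝ, A = fun t => (π/2 - a) * (1 - t) := ⟨_, rfl⟩
  obtain ⟨B, hB⟩ : ∃ A : ℝ → ℝ, A = fun t => (π/2 - b) * t := ⟨_, rfl⟩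
  obtain ⟨C, hC⟩ : ∃ A : ℝ → ℝ, A = fun t => b * t := ⟨_, rfl⟩
  obtain ⟨E, hE⟩ : ∃ A : ℝ → ℝ, A = fun t => a * (1 - t) := ⟨_, rfl⟩
  have hD' : ∀ t, D t = sin (A t) * sin (B t) * sin (C t) * sin (E t) := by
    intro t
    rw [hD, hA, hB, hC, hE, ← sin_pi_div_two_sub]
    ring_nf
  have h1' : η₁ = fun t => sin (A t - B t) * sin (C t) * sin (E t) /
      (sin (A t) * sin (B t) * sin (C t) * sin (E t)) ^ ((2:ℝ)/3) := by
    funext t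
    rw [h1, hD', ← sin_pi_div_two_sub,
      show π / 2 - ((π - a - b) * t + a) = A t - B t by rw [hA, hB]; ring]
    simp only [hC, hE]
  have h2' : η₂ = fun t => sin (A t - C t) * sin (B t) * sin (E t) /
      (sin (A t) * sin (C t) * sin (B t) * sin (E t)) ^ ((2:ℝ)/3) := by
    funext t
    rw [h2, hD', ← sin_pi_div_two_sub,
      show π / 2 - ((π/2 - a + b) * t + a) = A t - C t by rw [hA, hC]; ring,
      mul_right_comm (sin (A t))]
    simp only [hB, hE]
  have h3' : η₃ = fun t => sin (A t - E t) * sin (B t) * sin (C t) /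
      (sin (A t) * sin (E t) * sin (B t) * sin (C t)) ^ ((2:ℝ)/3) := by
    funext t
    rw [h3, hD', ← sin_pi_div_two_sub,
      show π / 2 - ((π/2 - 2*a) * t + 2*a) = A t - E t by rw [hA, hE]; ring,
      show sin (A t) * sin (E t) * sin (B t) * sin (C t) =
        sin (A t) * sin (B t) * sin (C t) * sin (E t) by ring]
    simp only [hB, hC]
  have main : ∀ t ∈ Set.Ioo (0:ℝ) 1, 0 < D t ∧
      (DifferentiableAt ℝ η₁ t ∧ DifferentiableAt ℝ η₂ t ∧ DifferentiableAt ℝ η₃ t) ∧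
      deriv η₁ t < 0 ∧ deriv η₂ t < 0 ∧ 0 < deriv η₃ t := by
    rintro t ⟨t0, t1⟩
    have s0 : 0 < 1 - t := by linarith
    have dA : HasDerivAt A (-(π/2 - a)) t := by
      rw [hA]; exact (((hasDerivAt_id t).const_sub 1).const_mul (π/2 - a)).congr_deriv (by ring)
    have dB : HasDerivAt B (π/2 - b) t := by
      rw [hB]; exact ((hasDerivAt_id t).const_mul (π/2 - b)).congr_deriv (by ring)
    have dC : HasDerivAt C b t := by
      rw [hC]; exact ((hasDerivAt_id t).const_mul b).congr_deriv (by ring)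
    have dE : HasDerivAt E (-a) t := by
      rw [hE]; exact (((hasDerivAt_id t).const_sub 1).const_mul a).congr_deriv (by ring)
    have vA : A t = (π/2 - a) * (1 - t) := by rw [hA]
    have vB : B t = (π/2 - b) * t := by rw [hB]
    have vC : C t = b * t := by rw [hC]
    have vE : E t = a * (1 - t) := by rw [hE]
    obtain ⟨A1, A2, A3, A4, A5⟩ := aux_cot' (A t) (1 - t) (π/2 - a) (by linarith) s0 vA
      (by rw [vA]; nlinarith)
    obtain ⟨B1, B2, B3, B4, B5⟩ := aux_cot' (B t) t (π/2 - b) (by linarith) t0 vB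
      (by rw [vB]; nlinarith)
    obtain ⟨C1, C2, C3, C4, C5⟩ := aux_cot' (C t) t b (by linarith) t0 vC
      (by rw [vC]; nlinarith)
    obtain ⟨E1, E2, E3, E4, E5⟩ := aux_cot' (E t) (1 - t) a (by linarith) s0 vE
      (by rw [vE]; nlinarith)
    obtain ⟨K1, K1p, H1⟩ := aux_gen A B C E _ _ _ _ t dA dB dC dE A1 B1 C1 E1
    obtain ⟨K2, K2p, H2⟩ := aux_gen A C B E _ _ _ _ t dA dC dB dE A1 C1 B1 E1
    obtain ⟨K3, K3p, H3⟩ := aux_gen A E B C _ _ _ _ t dA dE dB dC A1 E1 B1 C1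
    rw [← h1'] at H1
    rw [← h2'] at H2
    rw [← h3'] at H3
    have tp : 0 < 1 / t := by positivity
    have sp : 0 < 1 / (1 - t) := by positivity
    refine ⟨by rw [hD']; positivity, ⟨H1.differentiableAt, H2.differentiableAt,
      H3.differentiableAt⟩, ?_, ?_, ?_⟩
    · rw [H1.deriv]
      apply mul_neg_of_pos_of_neg K1p
      have := aux_neg _ _ _ _ _ _ _ _ _ _ A2 B2 tp sp A5 B5 A3 A4 E3 E4 B3 B4 C3 C4
      refine lt_of_eq_of_lt ?_ this
      ring
    · rw [H2.deriv]
      apply mul_neg_of_pos_of_neg K2p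
      have := aux_neg _ _ _ _ _ _ _ _ _ _ A2 C2 tp sp A5 C5 A3 A4 E3 E4 C3 C4 B3 B4
      refine lt_of_eq_of_lt ?_ this
      ring
    · rw [H3.deriv]
      apply mul_pos K3p
      have Ep : 0 < E t := by rw [vE]; positivity
      have EA : E t < A t := by rw [vE, vA]; gcongr; linarith
      have AE : A t + E t < π / 2 := by
        rw [vE, vA, ← add_mul]
        have := mul_pos hpi t0
        linarith
      have F := aux_F (A t) (E t) Ep EA AE
      have W : 0 < cos (E t) / sin (E t) - cos (A t) / sin (A t) := by
        have : cos (E t) / sin (E t) - cos (A t) / sin (A t) =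
            sin (A t - E t) / (sin (A t) * sin (E t)) := by
          rw [sin_sub]; field_simp
        rw [this]
        have : 0 < sin (A t - E t) := sin_pos_of_pos_of_lt_pi (by linarith)
          (by linarith)
        positivity
      have P := mul_pos W (add_pos B3 C3)
      generalize cos (E t) / sin (E t) = w at *
      generalize cos (A t) / sin (A t) = x at *
      generalize cos (B t) / sin (B t) = y at *
      generalize cos (C t) / sin (C t) = z at *
      have F' : 0 ≤ a / sin (E t) ^ 2 - (π/2 - a) / sin (A t) ^ 2 - 1 / 3 * (w - x) *
          ((π/2 - a) * x + a * w) := by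
        by_contra! hneg
        have := mul_neg_of_pos_of_neg s0 hneg
        refine absurd F (not_le.mpr (lt_of_eq_of_lt ?_ this))
        generalize sin (E t) = p at *
        generalize sin (A t) = q at *
        rw [vE, vA]
        ring
      have e : -(-a / sin (E t) ^ 2) + -(π/2 - a) / sin (A t) ^ 2 + 1 / 3 * (w - x) *
          (-(π/2 - a) * x + -a * w + (π/2 - b) * y + b * z) =
          (a / sin (E t) ^ 2 - (π/2 - a) / sin (A t) ^ 2 - 1 / 3 * (w - x) *
          ((π/2 - a) * x + a * w)) + 1 / 3 * ((w - x) * ((π/2 - b) * y + b * z)) := by ring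
      rw [e]
      linarith
  exact ⟨fun t ht => (main t ht).1, fun t ht => (main t ht).2⟩
end

section
/- Let n = 1, so F(y_1,y_2) = (cos(y_1+y_2)·sin y_1·sin y_2)^{1/2} on Ω = {y_1 > 0, y_2 > 0, y_1 + y_2 < π/2}. Fix y_2 ∈ (0, π/2). Then the function y_1 ↦ ∂F/∂y_1(y_1, y_2), i.e. y_1 ↦ cos(2y_1 + y_2) · sin y_2 / ( 2 · (cos(y_1+y_2) · sin y_1 · sin y_2)^{1/2} ), is a strictly decreasing continuous bijection from the interval (0, (π/2 − y_2)/2) onto (0, +∞); in particular it tends to +∞ as y_1 → 0⁺ and to 0 as y_1 → ((π/2 − y_2)/2)⁻. -/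
open Real Filter Topology

theorem stmt_17 (y₂ : ℝ) (hy₂ : y₂ ∈ Set.Ioo 0 (π/2))
    (g : ℝ → ℝ)
    (hg : ∀ y₁, g y₁ = cos (2 * y₁ + y₂) * sin y₂ /
        (2 * (cos (y₁ + y₂) * sin y₁ * sin y₂) ^ ((1:ℝ)/2))) :
    StrictAntiOn g (Set.Ioo 0 ((π/2 - y₂)/2)) ∧
    ContinuousOn g (Set.Ioo 0 ((π/2 - y₂)/2)) ∧
    Set.BijOn g (Set.Ioo 0 ((π/2 - y₂)/2)) (Set.Ioi 0) ∧
    Tendsto g (𝓝[>] 0) atTop ∧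
    Tendsto g (𝓝[<] ((π/2 - y₂)/2)) (𝓝 0) := by
  obtain ⟨h0, h1⟩ := hy₂
  have hpi := Real.pi_pos
  have hs2 : 0 < sin y₂ := sin_pos_of_pos_of_lt_pi h0 (by linarith)
  have hc2 : 0 < cos y₂ := cos_pos_of_mem_Ioo ⟨by linarith, h1⟩
  have hc : 0 < (π/2 - y₂)/2 := by linarith
  have hpos : ∀ x, 0 < x → x ≤ (π/2 - y₂)/2 → 0 < cos (x + y₂) * sin x * sin y₂ := by
    intro x hx hx'
    have a : 0 < cos (x + y₂) := cos_pos_of_mem_Ioo ⟨by linarith, by linarith⟩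
    have b : 0 < sin x := sin_pos_of_pos_of_lt_pi hx (by linarith)
    positivity
  have hnum : ∀ x ∈ Set.Ioo 0 ((π/2 - y₂)/2), 0 < cos (2 * x + y₂) := by
    rintro x ⟨hx, hx'⟩
    exact cos_pos_of_mem_Ioo ⟨by linarith, by linarith⟩
  have hcont : ∀ x, 0 < x → x ≤ (π/2 - y₂)/2 → ContinuousAt g x := by
    intro x hx hx'
    have hp := hpos x hx hx'
    rw [show g = _ from funext hg]
    refine ContinuousAt.div (by fun_prop) ?_ (by positivity)
    refine continuousAt_const.mul (ContinuousAt.rpow_const (by fun_prop) (Or.inl hp.ne'))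
  have hid : ∀ x, cos (x + y₂) * sin x = (sin (2 * x + y₂) - sin y₂) / 2 := by
    intro x
    have e1 : sin (2 * x + y₂) = sin ((x + y₂) + x) := by ring_nf
    have e2 : sin y₂ = sin ((x + y₂) - x) := by ring_nf
    rw [e1, sin_add (x + y₂) x]
    conv_rhs => rw [e2, sin_sub (x + y₂) x]
    ring
  have hanti : StrictAntiOn g (Set.Ioo 0 ((π/2 - y₂)/2)) := by
    intro a ha b hb hab
    have hpa := hpos a ha.1 ha.2.le
    have hpb := hpos b hb.1 hb.2.le
    have hna := hnum a ha
    have hnb := hnum b hb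
    obtain ⟨ha1, ha2⟩ := ha
    obtain ⟨hb1, hb2⟩ := hb
    have hlt : cos (2 * b + y₂) < cos (2 * a + y₂) :=
      cos_lt_cos_of_nonneg_of_le_pi (by linarith) (by linarith) (by linarith)
    have hsl : sin (2 * a + y₂) < sin (2 * b + y₂) :=
      sin_lt_sin_of_lt_of_le_pi_div_two (by linarith) (by linarith) (by linarith)
    rw [hg, hg]
    refine div_lt_div₀ (mul_lt_mul_of_pos_right hlt hs2) ?_ (by positivity) (by positivity)
    refine mul_le_mul_of_nonneg_left (Real.rpow_le_rpow hpa.le ?_ (by norm_num)) (by norm_num)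
    refine mul_le_mul_of_nonneg_right ?_ hs2.le
    rw [hid, hid]; linarith
  have hcOn : ContinuousOn g (Set.Ioo 0 ((π/2 - y₂)/2)) :=
    fun x hx => (hcont x hx.1 hx.2.le).continuousWithinAt
  have hr : Tendsto g (𝓝[<] ((π/2 - y₂)/2)) (𝓝 0) := by
    have h := (hcont _ hc le_rfl).tendsto
    have e : g ((π/2 - y₂)/2) = 0 := by
      rw [hg, show 2 * ((π/2 - y₂)/2) + y₂ = π/2 by ring, cos_pi_div_two]; simp
    rw [e] at h
    exact h.mono_left nhdsWithin_le_nhds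
  have hl : Tendsto g (𝓝[>] 0) atTop := by
    rw [show g = _ from funext hg]
    simp only [div_eq_mul_inv]
    refine Tendsto.pos_mul_atTop (C := cos y₂ * sin y₂) (by positivity) ?_ ?_
    · have : Continuous fun x : ℝ => cos (2 * x + y₂) * sin y₂ := by fun_prop
      have h := this.tendsto 0
      simp only [mul_zero, zero_add] at h
      exact h.mono_left nhdsWithin_le_nhds
    · apply Tendsto.inv_tendsto_nhdsGT_zero
      refine tendsto_nhdsWithin_iff.2 ⟨?_, ?_⟩
      · have : Continuous fun x : ℝ =>
            2 * (cos (x + y₂) * sin x * sin y₂) ^ ((1:ℝ) * 2⁻¹) := by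
          refine continuous_const.mul (Continuous.rpow_const (by fun_prop) ?_)
          intro x; right; norm_num
        have h := this.tendsto 0
        have e : 2 * (cos (0 + y₂) * sin 0 * sin y₂) ^ ((1:ℝ) * 2⁻¹) = 0 := by
          rw [sin_zero, mul_zero, zero_mul, Real.zero_rpow (by norm_num), mul_zero]
        rw [e] at h
        exact h.mono_left nhdsWithin_le_nhds
      · filter_upwards [Ioo_mem_nhdsGT hc] with x hx
        have := hpos x hx.1 hx.2.le
        exact Set.mem_Ioi.2 (by positivity)
  refine ⟨hanti, hcOn, ⟨?_, hanti.injOn, ?_⟩, hl, hr⟩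
  · intro x hx
    have hp := hpos x hx.1 hx.2.le
    have hn := hnum x hx
    rw [Set.mem_Ioi, hg]
    positivity
  · exact isPreconnected_Ioo.intermediate_value_Ioi
      (le_principal_iff.2 (Ioo_mem_nhdsLT hc)) (le_principal_iff.2 (Ioo_mem_nhdsGT hc)) hcOn hr hl
end
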